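/- arXiv:2105.12199 — 3 statements merged into one kernel-verified Lean document; each statement's English description precedes it below -/
import Mathlib

section
/- Let A be a *-algebra and let f, g be representable positive functionals on A. Then there exists a representable positive functional f_r on A such that: f_r ≤ f, f_r is absolutely continuous with respect to g, and f_r is the greatest among all representable positive functionals f₀ on A with f₀ ≤ f and f₀ absolutely continuous with respect to g. Moreover, the positive functional f_s := f − f_r is representable, f_s and g are singular, and f_s and f_r are singular. (Lebesgue decomposition of f with respect to g.) -/
open scoped ComplexOrder InnerProductSpace

section StarAlgebraDefs

variable {A : Type} [NonUnitalRing A] [Module ℂ A] [SMulCommClass ℂ A A]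
  [IsScalarTower ℂ A A] [StarRing A] [StarModule ℂ A]

/-- A linear functional on a `⋆`-algebra is positive if `0 ≤ f (a⋆ * a)` for every `a`. -/
def IsPosFn (f : A →ₗ[ℂ] ℂ) : Prop := ∀ a : A, 0 ≤ f (star a * a)

/-- Order on positive functionals: `f ≤ g` iff `g - f` is positive. -/
def FnLE (f g : A →ₗ[ℂ] ℂ) : Prop := IsPosFn (g - f)

/-- `f` is induced by a `⋆`-representation on the Hilbert space `H` with a cyclic vector. -/
def IsRepOn (f : A →ₗ[ℂ] ℂ) (H : Type) [NormedAddCommGroup H]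
    [InnerProductSpace ℂ H] [CompleteSpace H] : Prop :=
  ∃ (π : A →⋆ₙₐ[ℂ] (H →L[ℂ] H)) (ξ : H),
    DenseRange (fun a : A => π a ξ) ∧ ∀ a : A, f a = ⟪ξ, π a ξ⟫_ℂ

/-- A positive linear functional is representable if it is induced by a cyclic
`⋆`-representation on some complex Hilbert space. -/
def IsRepresentable (f : A →ₗ[ℂ] ℂ) : Prop :=
  ∃ (H : Type) (_ : NormedAddCommGroup H) (_ : InnerProductSpace ℂ H) (_ : CompleteSpace H),
    IsRepOn f H

/-- Absolute continuity `f ≪ g` for representable positive functionals: `f` is the pointwise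
limit of an increasing sequence of representable positive functionals `fₙ` with
`fₙ ≤ αₙ • g` for some positive reals `αₙ`. -/
def AbsContR (f g : A →ₗ[ℂ] ℂ) : Prop :=
  ∃ (fn : ℕ → (A →ₗ[ℂ] ℂ)) (α : ℕ → ℝ),
    (∀ n, IsRepresentable (fn n) ∧ IsPosFn (fn n)) ∧
    (∀ n, 0 < α n) ∧
    (∀ n, FnLE (fn n) (fn (n + 1))) ∧
    (∀ n, FnLE (fn n) (((α n : ℂ)) • g)) ∧
    (∀ a : A, Filter.Tendsto (fun n => fn n a) Filter.atTop (nhds (f a)))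

/-- Singularity `f ⊥ g` for representable positive functionals: the only representable
positive functional dominated by both `f` and `g` is `0`. -/
def SingularR (f g : A →ₗ[ℂ] ℂ) : Prop :=
  ∀ p : A →ₗ[ℂ] ℂ, IsRepresentable p → IsPosFn p → FnLE p f → FnLE p g → p = 0

/-- `f = fr + fs` is a Lebesgue decomposition of `f` with respect to `g` (representable
positive functionals). -/
def IsLebDecompR (f g fr fs : A →ₗ[ℂ] ℂ) : Prop :=
  IsRepresentable fr ∧ IsPosFn fr ∧ IsRepresentable fs ∧ IsPosFn fs ∧
    f = fr + fs ∧ AbsContR fr g ∧ SingularR fs g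

/-- The Lebesgue decomposition of `f` with respect to `g` is unique. -/
def LebDecompUniqueForR (f g : A →ₗ[ℂ] ℂ) : Prop :=
  ∀ fr fs fr' fs' : A →ₗ[ℂ] ℂ, IsLebDecompR f g fr fs → IsLebDecompR f g fr' fs' →
    fr = fr' ∧ fs = fs'

end StarAlgebraDefs

/-- The Lebesgue decomposition of representable positive functionals over `A` is unique. -/
def LebDecompUniqueR (A : Type) [NonUnitalRing A] [Module ℂ A] [SMulCommClass ℂ A A]
    [IsScalarTower ℂ A A] [StarRing A] [StarModule ℂ A] : Prop :=
  ∀ f g : A →ₗ[ℂ] ℂ, IsRepresentable f → IsPosFn f → IsRepresentable g → IsPosFn g →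
    LebDecompUniqueForR f g

section LebProof

set_option linter.unusedSectionVars false

variable {A : Type} [NonUnitalRing A] [Module ℂ A] [SMulCommClass ℂ A A]
  [IsScalarTower ℂ A A] [StarRing A] [StarModule ℂ A]
variable {H : Type} [NormedAddCommGroup H] [InnerProductSpace ℂ H] [CompleteSpace H]
variable {K : Type} [NormedAddCommGroup K] [InnerProductSpace ℂ K] [CompleteSpace K]

/-- The orbit map of a vector. -/
noncomputable def orb (π : A →⋆ₙₐ[ℂ] (H →L[ℂ] H)) (η : H) : A →ₗ[ℂ] H where
  toFun a := π a η
  map_add' a b := by simp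
  map_smul' c a := by simp

@[simp] lemma orb_apply (π : A →⋆ₙₐ[ℂ] (H →L[ℂ] H)) (η : H) (a : A) : orb π η a = π a η := rfl

/-- The functional attached to an operator. -/
noncomputable def opFn (π : A →⋆ₙₐ[ℂ] (H →L[ℂ] H)) (ξ : H) (T : H →L[ℂ] H) : A →ₗ[ℂ] ℂ where
  toFun a := ⟪ξ, T (π a ξ)⟫_ℂ
  map_add' a b := by simp
  map_smul' c a := by simp

@[simp] lemma opFn_apply (π : A →⋆ₙₐ[ℂ] (H →L[ℂ] H)) (ξ : H) (T : H →L[ℂ] H) (a : A) :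
    opFn π ξ T a = ⟪ξ, T (π a ξ)⟫_ℂ := rfl

lemma rep_inner_left (π : A →⋆ₙₐ[ℂ] (H →L[ℂ] H)) (a : A) (x y : H) :
    ⟪x, π (star a) y⟫_ℂ = ⟪π a x, y⟫_ℂ := by
  rw [map_star, ContinuousLinearMap.star_eq_adjoint, ContinuousLinearMap.adjoint_inner_right]

lemma rep_mul (π : A →⋆ₙₐ[ℂ] (H →L[ℂ] H)) (a b : A) (x : H) :
    π (a * b) x = π a (π b x) := by
  rw [map_mul]; rfl

lemma mem_closure_orb (π : A →⋆ₙₐ[ℂ] (H →L[ℂ] H)) (η : H) (a : A) (x : H)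
    (hx : x ∈ (LinearMap.range (orb π η)).topologicalClosure) :
    π a x ∈ (LinearMap.range (orb π η)).topologicalClosure := by
  have h : Set.MapsTo (π a) (LinearMap.range (orb π η) : Set H) (LinearMap.range (orb π η)) := by
    rintro _ ⟨b, rfl⟩
    exact ⟨a * b, by simp⟩
  exact h.closure (π a).continuous hx

/-- The restriction of a representation to an invariant closed subspace. -/
noncomputable def restrRep (π : A →⋆ₙₐ[ℂ] (H →L[ℂ] H)) (N : Submodule ℂ H) [CompleteSpace N]
    (hN : ∀ a, ∀ x ∈ N, π a x ∈ N) : A →⋆ₙₐ[ℂ] (N →L[ℂ] N) where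
  toFun a := ((π a).comp N.subtypeL).codRestrict N (fun x => hN a x x.2)
  map_smul' c a := by ext x; simp; rfl
  map_zero' := by ext x; simp
  map_add' a b := by ext x; simp; rfl
  map_mul' a b := by ext x; simp; rfl
  map_star' a := by
    rw [ContinuousLinearMap.star_eq_adjoint, ContinuousLinearMap.eq_adjoint_iff]
    intro x y
    simp only [Submodule.coe_inner]
    change ⟪π (star a) (x : H), (y : H)⟫_ℂ = ⟪(x : H), π a (y : H)⟫_ℂ
    rw [← rep_inner_left, star_star]

lemma isRepresentable_of_vec (π : A →⋆ₙₐ[ℂ] (H →L[ℂ] H)) (η : H) (f : A →ₗ[ℂ] ℂ)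
    (hf : ∀ a, f a = ⟪η, π a η⟫_ℂ) : IsRepresentable f := by
  let N := (LinearMap.range (orb π η)).topologicalClosure
  have hNc : IsClosed (N : Set H) := Submodule.isClosed_topologicalClosure _
  have : CompleteSpace N := hNc.completeSpace_coe
  have hN : ∀ a, ∀ x ∈ N, π a x ∈ N := fun a x hx => mem_closure_orb π η a x hx
  have hmem : ∀ a, π a η ∈ N := fun a => Submodule.le_topologicalClosure _ ⟨a, rfl⟩
  let P := N.starProjection
  have hPη : P η ∈ N := Submodule.starProjection_apply_mem _ _
  have horth : ∀ a, π a (P η) = π a η := by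
    intro a
    have h1 : π a (η - P η) ∈ N := by
      rw [map_sub]; exact N.sub_mem (hmem a) (hN a _ hPη)
    have h2 : ⟪π a (η - P η), π a (η - P η)⟫_ℂ = 0 := by
      rw [← rep_inner_left]
      have : η - P η ∈ Nᗮ := Submodule.sub_starProjection_mem_orthogonal _
      exact Submodule.inner_left_of_mem_orthogonal (hN _ _ h1) this
    have h3 := inner_self_eq_zero.1 h2
    rw [map_sub, sub_eq_zero] at h3
    exact h3.symm
  refine ⟨N, inferInstance, inferInstance, inferInstance, restrRep π N hN, ⟨P η, hPη⟩, ?_, ?_⟩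
  · have hval : ∀ a, ((restrRep π N hN a ⟨P η, hPη⟩ : N) : H) = π a η := horth
    intro x
    rw [closure_subtype]
    have hx : (x : H) ∈ closure (LinearMap.range (orb π η) : Set H) := x.2
    refine closure_mono ?_ hx
    rintro _ ⟨b, rfl⟩
    exact ⟨_, ⟨b, rfl⟩, hval b⟩
  · intro a
    rw [hf, Submodule.coe_inner]
    change _ = ⟪P η, π a (P η)⟫_ℂ
    rw [horth]
    exact (Submodule.inner_starProjection_left_eq_right N η (π a η)).trans
      (by rw [Submodule.starProjection_eq_self_iff.2 (hmem a)]) |>.symm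

lemma isRepresentable_opFn (π : A →⋆ₙₐ[ℂ] (H →L[ℂ] H)) (ξ : H) (T : H →L[ℂ] H)
    (hT : 0 ≤ T) (hc : ∀ a, Commute T (π a)) : IsRepresentable (opFn π ξ T) := by
  have hs : ∀ a, Commute (CFC.sqrt T) (π a) := fun a => by
    rw [CFC.sqrt_eq_cfc]
    exact (hc a).cfc_nnreal _
  have hsa : IsSelfAdjoint (CFC.sqrt T) := (CFC.sqrt_nonneg T).isSelfAdjoint
  refine isRepresentable_of_vec π (CFC.sqrt T ξ) _ fun a => ?_
  have h1 : π a (CFC.sqrt T ξ) = CFC.sqrt T (π a ξ) :=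
    (congrArg (fun S : H →L[ℂ] H => S ξ) (hs a).eq).symm
  have h2 : T (π a ξ) = CFC.sqrt T (CFC.sqrt T (π a ξ)) := by
    conv_lhs => rw [← CFC.sqrt_mul_sqrt_self T hT]
    rfl
  rw [h1, opFn_apply, h2, ← ContinuousLinearMap.adjoint_inner_left,
    ContinuousLinearMap.isSelfAdjoint_iff'.1 hsa]

/-- Direct sum of operators. -/
noncomputable def dsum (S : H →L[ℂ] H) (T : K →L[ℂ] K) : WithLp 2 (H × K) →L[ℂ] WithLp 2 (H × K) :=
  ((WithLp.prodContinuousLinearEquiv 2 ℂ H K).symm : H × K →L[ℂ] WithLp 2 (H × K)).comp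
    ((S.prodMap T).comp (WithLp.prodContinuousLinearEquiv 2 ℂ H K : WithLp 2 (H × K) →L[ℂ] H × K))

@[simp] lemma dsum_apply (S : H →L[ℂ] H) (T : K →L[ℂ] K) (x : WithLp 2 (H × K)) :
    dsum S T x = WithLp.toLp 2 (S x.fst, T x.snd) := rfl

/-- Direct sum of representations. -/
noncomputable def dsumRep (π : A →⋆ₙₐ[ℂ] (H →L[ℂ] H)) (ρ : A →⋆ₙₐ[ℂ] (K →L[ℂ] K)) :
    A →⋆ₙₐ[ℂ] (WithLp 2 (H × K) →L[ℂ] WithLp 2 (H × K)) where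
  toFun a := dsum (π a) (ρ a)
  map_smul' c a := by ext x; simp; rfl
  map_zero' := by ext x <;> simp
  map_add' a b := by ext x; simp; rfl
  map_mul' a b := by ext x <;> simp
  map_star' a := by
    rw [ContinuousLinearMap.star_eq_adjoint, ContinuousLinearMap.eq_adjoint_iff]
    intro x y
    simp only [WithLp.prod_inner_apply, dsum_apply]
    rw [← rep_inner_left, ← rep_inner_left, star_star]
    rfl

lemma IsRepresentable.add {f g : A →ₗ[ℂ] ℂ} (hf : IsRepresentable f) (hg : IsRepresentable g) :
    IsRepresentable (f + g) := by
  obtain ⟨H, _, _, _, π, ξ, -, h1⟩ := hf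
  obtain ⟨K, _, _, _, ρ, η, -, h2⟩ := hg
  refine isRepresentable_of_vec (dsumRep π ρ) (WithLp.toLp 2 (ξ, η)) _ fun a => ?_
  rw [LinearMap.add_apply, h1, h2, WithLp.prod_inner_apply]
  rfl

lemma nonneg_op_iff (T : H →L[ℂ] H) : 0 ≤ T ↔ ∀ x, 0 ≤ ⟪x, T x⟫_ℂ := by
  rw [ContinuousLinearMap.nonneg_iff_isPositive]
  refine ⟨fun h x => h.inner_nonneg_right x, fun h => ?_⟩
  rw [ContinuousLinearMap.isPositive_iff_complex]
  intro x
  have h1 : 0 ≤ ⟪T x, x⟫_ℂ := by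
    rw [← inner_conj_symm]
    exact star_nonneg_iff.2 (h x)
  obtain ⟨h2, h3⟩ := Complex.le_def.1 h1
  refine ⟨?_, h2⟩
  apply Complex.ext
  · simp
  · simpa using h3

lemma nonneg_op_of_dense {π : A →⋆ₙₐ[ℂ] (H →L[ℂ] H)} {ξ : H}
    (hd : DenseRange (fun a : A => π a ξ)) (T : H →L[ℂ] H)
    (h : ∀ a, 0 ≤ ⟪π a ξ, T (π a ξ)⟫_ℂ) : 0 ≤ T := by
  rw [nonneg_op_iff]
  intro x
  refine hd.induction_on (p := fun x => 0 ≤ ⟪x, T x⟫_ℂ) x ?_ h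
  exact isClosed_le continuous_const (by fun_prop)

lemma opFn_star_mul {π : A →⋆ₙₐ[ℂ] (H →L[ℂ] H)} {ξ : H} {T : H →L[ℂ] H}
    (hc : ∀ a, Commute T (π a)) (a : A) :
    opFn π ξ T (star a * a) = ⟪π a ξ, T (π a ξ)⟫_ℂ := by
  rw [opFn_apply, rep_mul, ← rep_inner_left]
  exact congrArg (fun S : H →L[ℂ] H => ⟪ξ, S (π a ξ)⟫_ℂ) (hc (star a)).eq

lemma isPosFn_opFn {π : A →⋆ₙₐ[ℂ] (H →L[ℂ] H)} {ξ : H} {T : H →L[ℂ] H}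
    (hT : 0 ≤ T) (hc : ∀ a, Commute T (π a)) : IsPosFn (opFn π ξ T) := fun a => by
  rw [opFn_star_mul hc]; exact (nonneg_op_iff T).1 hT _

lemma opFn_sub (π : A →⋆ₙₐ[ℂ] (H →L[ℂ] H)) (ξ : H) (S T : H →L[ℂ] H) :
    opFn π ξ (S - T) = opFn π ξ S - opFn π ξ T := by
  ext a; simp

lemma opFn_smul (π : A →⋆ₙₐ[ℂ] (H →L[ℂ] H)) (ξ : H) (c : ℂ) (T : H →L[ℂ] H) :
    opFn π ξ (c • T) = c • opFn π ξ T := by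
  ext a; simp

lemma fnLE_opFn_iff {π : A →⋆ₙₐ[ℂ] (H →L[ℂ] H)} {ξ : H}
    (hd : DenseRange (fun a : A => π a ξ)) {S T : H →L[ℂ] H}
    (hS : ∀ a, Commute S (π a)) (hT : ∀ a, Commute T (π a)) :
    FnLE (opFn π ξ S) (opFn π ξ T) ↔ S ≤ T := by
  have hc : ∀ a, Commute (T - S) (π a) := fun a => (hT a).sub_left (hS a)
  unfold FnLE
  rw [← opFn_sub, ← sub_nonneg (a := T)]
  refine ⟨fun h => nonneg_op_of_dense hd _ fun a => ?_, fun h => isPosFn_opFn h hc⟩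
  rw [← opFn_star_mul hc]; exact h a

/-- Radon-Nikodym: a representable functional dominated by a cyclic vector functional comes from a
positive operator in the commutant. -/
lemma exists_op {π : A →⋆ₙₐ[ℂ] (H →L[ℂ] H)} {ξ : H}
    (hd : DenseRange (fun a : A => π a ξ)) {p : A →ₗ[ℂ] ℂ} (hp : IsRepresentable p)
    (hle : FnLE p (opFn π ξ 1)) :
    ∃ T : H →L[ℂ] H, 0 ≤ T ∧ (∀ a, Commute T (π a)) ∧ p = opFn π ξ T := by
  obtain ⟨K, _, _, _, ρ, η, hd', hp⟩ := hp
  have hn : ∃ C, ∀ a, ‖orb ρ η a‖ ≤ C * ‖orb π ξ a‖ := by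
    refine ⟨1, fun a => ?_⟩
    have h1 := hle a
    rw [LinearMap.sub_apply, sub_nonneg, hp, opFn_apply, rep_mul, rep_inner_left,
      one_apply_eq_self, rep_mul, rep_inner_left,
      inner_self_eq_norm_sq_to_K, inner_self_eq_norm_sq_to_K] at h1
    have h2 : ‖ρ a η‖ ^ 2 ≤ ‖π a ξ‖ ^ 2 := by exact_mod_cast h1
    rw [one_mul]
    exact le_of_sq_le_sq h2 (norm_nonneg _)
  let V : H →L[ℂ] K := (orb ρ η).extendOfNorm (orb π ξ)
  have hV : ∀ a, V (π a ξ) = ρ a η := fun a => LinearMap.extendOfNorm_eq hd hn a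
  have hVc : ∀ a x, V (π a x) = ρ a (V x) := by
    intro a x
    refine hd.induction_on (p := fun x => V (π a x) = ρ a (V x)) x ?_ fun b => ?_
    · exact isClosed_eq (by fun_prop) (by fun_prop)
    · rw [← rep_mul, hV, hV, rep_mul]
  have hVξ : V ξ = η := by
    rw [← sub_eq_zero]
    have h0 : ∀ y : K, ⟪y, V ξ - η⟫_ℂ = 0 := by
      intro y
      refine hd'.induction_on (p := fun y => ⟪y, V ξ - η⟫_ℂ = 0) y ?_ fun b => ?_
      · exact isClosed_eq (by fun_prop) (by fun_prop)
      · rw [← rep_inner_left, map_sub, ← hVc, hV, sub_self, inner_zero_right]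
    exact inner_self_eq_zero.1 (h0 _)
  refine ⟨V.adjoint.comp V, ?_, ?_, ?_⟩
  · rw [ContinuousLinearMap.nonneg_iff_isPositive]
    exact ContinuousLinearMap.isPositive_adjoint_comp_self V
  · intro a
    ext x
    refine ext_inner_left ℂ fun y => ?_
    change ⟪y, V.adjoint (V (π a x))⟫_ℂ = ⟪y, π a (V.adjoint (V x))⟫_ℂ
    have h : ⟪y, π a (V.adjoint (V x))⟫_ℂ = ⟪π (star a) y, V.adjoint (V x)⟫_ℂ := by
      rw [← rep_inner_left, star_star]
    rw [h, ContinuousLinearMap.adjoint_inner_right, ContinuousLinearMap.adjoint_inner_right, hVc,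
      hVc, ← rep_inner_left, star_star]
  · ext a
    rw [hp, opFn_apply, ContinuousLinearMap.comp_apply, ContinuousLinearMap.adjoint_inner_right,
      hV, hVξ]

lemma pow_nonneg_op {F : H →L[ℂ] H} (hF : 0 ≤ F) (n : ℕ) : 0 ≤ F ^ n := by
  induction n with
  | zero =>
    rw [pow_zero, ContinuousLinearMap.nonneg_iff_isPositive]
    exact ContinuousLinearMap.isPositive_one
  | succ n ih =>
    rw [pow_succ]
    exact Commute.mul_nonneg ih hF (Commute.pow_self F n)

lemma pow_succ_le_op {F : H →L[ℂ] H} (hF : 0 ≤ F) (hF1 : F ≤ 1) (n : ℕ) : F ^ (n + 1) ≤ F ^ n := by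
  rw [← sub_nonneg]
  have h : F ^ n - F ^ (n + 1) = F ^ n * (1 - F) := by rw [mul_sub, mul_one, pow_succ]
  rw [h]
  exact Commute.mul_nonneg (pow_nonneg_op hF n) (sub_nonneg.2 hF1)
    ((Commute.one_right _).sub_right (Commute.pow_self F n))

lemma pow_le_one_op {F : H →L[ℂ] H} (hF : 0 ≤ F) (hF1 : F ≤ 1) (n : ℕ) : F ^ n ≤ 1 := by
  induction n with
  | zero => simp
  | succ n ih => exact (pow_succ_le_op hF hF1 n).trans ih

lemma sub_pow_le_op {F : H →L[ℂ] H} (hF : 0 ≤ F) (hF1 : F ≤ 1) (n : ℕ) :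
    F - F ^ (n + 1) ≤ (n + 1 : ℂ) • (1 - F) := by
  have hG : 0 ≤ 1 - F := sub_nonneg.2 hF1
  have step : ∀ k, F ^ k - F ^ (k + 1) ≤ 1 - F := by
    intro k
    rw [← sub_nonneg]
    have h : 1 - F - (F ^ k - F ^ (k + 1)) = (1 - F ^ k) * (1 - F) := by
      rw [pow_succ]; noncomm_ring
    rw [h]
    refine Commute.mul_nonneg (sub_nonneg.2 (pow_le_one_op hF hF1 k)) hG ?_
    exact (Commute.one_left _).sub_left
      ((Commute.one_right _).sub_right (Commute.pow_self F k))
  induction n with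
  | zero => simpa using hG
  | succ n ih =>
    calc F - F ^ (n + 1 + 1) = (F - F ^ (n + 1)) + (F ^ (n + 1) - F ^ (n + 1 + 1)) := by abel
      _ ≤ (n + 1 : ℂ) • (1 - F) + (1 - F) := add_le_add ih (step _)
      _ = _ := by push_cast; module

lemma tendsto_pow_sub {F : H →L[ℂ] H} (hF : 0 ≤ F) (hF1 : F ≤ 1) (y : H) :
    Filter.Tendsto (fun n : ℕ => (F ^ n) ((1 - F) y)) Filter.atTop (nhds 0) := by
  let c : ℕ → ℝ := fun n => RCLike.re ⟪y, (F ^ n) y⟫_ℂ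
  have hpos : ∀ {T : H →L[ℂ] H}, 0 ≤ T → 0 ≤ RCLike.re ⟪y, T y⟫_ℂ := fun h =>
    (Complex.le_def.1 ((nonneg_op_iff _).1 h y)).1
  have hanti : Antitone c := antitone_nat_of_succ_le fun n => by
    have := hpos (sub_nonneg.2 (pow_succ_le_op hF hF1 n))
    rw [ContinuousLinearMap.sub_apply, inner_sub_right, map_sub] at this
    simp only [c]; linarith
  obtain ⟨L, hL⟩ : ∃ L, Filter.Tendsto c Filter.atTop (nhds L) :=
    ⟨_, tendsto_atTop_ciInf hanti ⟨0, by rintro _ ⟨n, rfl⟩; exact hpos (pow_nonneg_op hF n)⟩⟩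
  have hsa : ∀ n, IsSelfAdjoint (F ^ n) := fun n => (pow_nonneg_op hF n).isSelfAdjoint
  have hin : ∀ m n, ⟪(F ^ m) y, (F ^ n) y⟫_ℂ = ⟪y, (F ^ (m + n)) y⟫_ℂ := fun m n => by
    rw [pow_add, ← ContinuousLinearMap.adjoint_inner_right,
      ContinuousLinearMap.isSelfAdjoint_iff'.1 (hsa m)]
    rfl
  have hnorm : ∀ n, ‖(F ^ n) ((1 - F) y)‖ ^ 2 = c (n + n) - 2 * c (n + n + 1) + c (n + n + 2) := by
    intro n
    have h : (F ^ n) ((1 - F) y) = (F ^ n) y - (F ^ (n + 1)) y := by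
      rw [pow_succ]; simp
    rw [h, ← inner_self_eq_norm_sq (𝕜 := ℂ), inner_sub_left, inner_sub_right, inner_sub_right,
      hin, hin, hin, hin]
    simp only [map_sub, c]
    rw [show n + 1 + n = n + n + 1 by ring, show n + (n + 1) = n + n + 1 by ring,
      show n + 1 + (n + 1) = n + n + 2 by ring]
    ring
  have h2 : Filter.Tendsto (fun n : ℕ => n + n) Filter.atTop Filter.atTop :=
    Filter.tendsto_atTop_mono (fun n => Nat.le_add_left n n) Filter.tendsto_id
  have hsq : Filter.Tendsto (fun n => ‖(F ^ n) ((1 - F) y)‖ ^ 2) Filter.atTop (nhds 0) := by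
    simp_rw [hnorm]
    have := ((hL.comp h2).sub ((hL.comp (Filter.tendsto_add_atTop_nat 1 |>.comp h2)).const_mul 2)).add
      (hL.comp (Filter.tendsto_add_atTop_nat 2 |>.comp h2))
    have h0 : L - 2 * L + L = 0 := by ring
    rw [h0] at this
    exact this
  rw [tendsto_zero_iff_norm_tendsto_zero]
  have := hsq.sqrt
  simpa [Real.sqrt_sq (norm_nonneg _)] using this

lemma exists_proj {F : H →L[ℂ] H} (hF : 0 ≤ F) (hF1 : F ≤ 1) :
    ∃ Q : H →L[ℂ] H, Q * Q = Q ∧ IsSelfAdjoint Q ∧ F * Q = Q ∧ Q * F = Q ∧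
      (∀ x, Filter.Tendsto (fun n : ℕ => (F ^ n) x) Filter.atTop (nhds (Q x))) ∧
      ∀ S, Commute F S → Commute Q S := by
  let N : Submodule ℂ H := LinearMap.ker ((1 - F : H →L[ℂ] H) : H →ₗ[ℂ] H)
  have hNc : IsClosed (N : Set H) := ContinuousLinearMap.isClosed_ker (1 - F : H →L[ℂ] H)
  have : CompleteSpace N := hNc.completeSpace_coe
  let Q := N.starProjection
  have hmemN : ∀ x, x ∈ N → F x = x := fun x hx => by
    have h : (1 - F) x = 0 := hx
    rw [ContinuousLinearMap.sub_apply, sub_eq_zero] at h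
    exact h.symm
  have hQsa : IsSelfAdjoint Q := isSelfAdjoint_starProjection N
  have hFQ : F * Q = Q := by
    ext x; exact hmemN _ (Submodule.starProjection_apply_mem _ _)
  have hQF : Q * F = Q := by
    have := congrArg star hFQ
    rwa [star_mul, hQsa.star_eq, hF.isSelfAdjoint.star_eq] at this
  have hQQ : Q * Q = Q := by
    ext x
    exact Submodule.starProjection_eq_self_iff.2 (Submodule.starProjection_apply_mem _ _)
  have hnorm : ∀ n x, ‖(F ^ n) x‖ ≤ ‖x‖ := fun n x => by
    have h1 : ‖F ^ n‖ ≤ 1 :=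
      (CStarAlgebra.norm_le_one_iff_of_nonneg _ (pow_nonneg_op hF n)).2 (pow_le_one_op hF hF1 n)
    simpa using (F ^ n).le_of_opNorm_le h1 x
  have hlim0 : ∀ y ∈ Nᗮ, Filter.Tendsto (fun n : ℕ => (F ^ n) y) Filter.atTop (nhds 0) := by
    intro y hy
    have hsa : (1 - F : H →L[ℂ] H).adjoint = 1 - F :=
      ContinuousLinearMap.isSelfAdjoint_iff'.1 ((IsSelfAdjoint.one _).sub hF.isSelfAdjoint)
    have hy' : y ∈ closure (Set.range (1 - F : H →L[ℂ] H)) := by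
      have h := ContinuousLinearMap.orthogonal_ker (1 - F : H →L[ℂ] H)
      rw [hsa] at h
      have h2 : y ∈ (LinearMap.range ((1 - F : H →L[ℂ] H) : H →ₗ[ℂ] H)).topologicalClosure := by
        rw [← h]; exact hy
      exact h2
    rw [Metric.tendsto_atTop]
    intro ε hε
    obtain ⟨_, ⟨z, rfl⟩, hz⟩ := Metric.mem_closure_iff.1 hy' (ε / 2) (half_pos hε)
    obtain ⟨n0, hn0⟩ := Metric.tendsto_atTop.1 (tendsto_pow_sub hF hF1 z) (ε / 2) (half_pos hε)
    refine ⟨n0, fun n hn => ?_⟩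
    have h1 := hn0 n hn
    rw [dist_zero_right] at h1 ⊢
    rw [dist_eq_norm] at hz
    calc ‖(F ^ n) y‖ = ‖(F ^ n) (y - (1 - F) z) + (F ^ n) ((1 - F) z)‖ := by
          rw [← map_add, sub_add_cancel]
      _ ≤ ‖y - (1 - F) z‖ + ‖(F ^ n) ((1 - F) z)‖ := (norm_add_le _ _).trans
          (add_le_add (hnorm _ _) le_rfl)
      _ < ε := by linarith
  have hlim : ∀ x, Filter.Tendsto (fun n : ℕ => (F ^ n) x) Filter.atTop (nhds (Q x)) := by
    intro x
    have h1 := hlim0 (x - Q x) (Submodule.sub_starProjection_mem_orthogonal _)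
    have h2 : ∀ n, (F ^ n) (Q x) = Q x := by
      intro n
      induction n with
      | zero => simp
      | succ n ih =>
        rw [pow_succ]
        change (F ^ n) (F (Q x)) = _
        rw [hmemN _ (Submodule.starProjection_apply_mem _ _), ih]
    have h3 := h1.add_const (Q x)
    simpa [map_sub, h2] using h3
  refine ⟨Q, hQQ, hQsa, hFQ, hQF, hlim, fun S hS => ?_⟩
  ext x
  have h1 := hlim (S x)
  have h2 := (S.continuous.tendsto _).comp (hlim x)
  refine tendsto_nhds_unique h1 (h2.congr fun n => ?_)
  exact (congrArg (fun T : H →L[ℂ] H => T x) (hS.pow_left n).eq).symm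

lemma op_apply_eq_zero {T : H →L[ℂ] H} (hT : 0 ≤ T) {x : H} (h : ⟪x, T x⟫_ℂ = 0) : T x = 0 := by
  have hs : CFC.sqrt T (CFC.sqrt T x) = T x := by
    conv_rhs => rw [← CFC.sqrt_mul_sqrt_self T hT]
    rfl
  have hsa : IsSelfAdjoint (CFC.sqrt T) := (CFC.sqrt_nonneg T).isSelfAdjoint
  rw [← hs, ← ContinuousLinearMap.adjoint_inner_left,
    ContinuousLinearMap.isSelfAdjoint_iff'.1 hsa, inner_self_eq_zero] at h
  rw [← hs, h, map_zero]

lemma op_apply_eq_zero_of_le {T S : H →L[ℂ] H} (hT : 0 ≤ T) (hTS : T ≤ S) {x : H} (h : S x = 0) :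
    T x = 0 := by
  refine op_apply_eq_zero hT (le_antisymm ?_ ((nonneg_op_iff T).1 hT x))
  have := (nonneg_op_iff _).1 (sub_nonneg.2 hTS) x
  simpa [h] using this

lemma op_eq_zero_of_le {T Q S : H →L[ℂ] H} (hQ : Q * Q = Q) (hT : 0 ≤ T) (hTQ : T ≤ Q)
    (hTS : T ≤ S) (hSQ : S * Q = 0) : T = 0 := by
  ext x
  have h1 : T (Q x) = 0 := op_apply_eq_zero_of_le hT hTS
    (congrArg (fun R : H →L[ℂ] H => R x) hSQ)
  have h2 : T (x - Q x) = 0 := op_apply_eq_zero_of_le hT hTQ (by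
    rw [map_sub, sub_eq_zero]
    exact (congrArg (fun R : H →L[ℂ] H => R x) hQ).symm)
  rw [map_sub, h1, sub_zero] at h2
  simpa using h2

lemma FnLE.trans {p q r : A →ₗ[ℂ] ℂ} (h1 : FnLE p q) (h2 : FnLE q r) : FnLE p r := fun a => by
  have := add_nonneg (h1 a) (h2 a)
  simpa using this

lemma singular_opFn {π : A →⋆ₙₐ[ℂ] (H →L[ℂ] H)} {ξ : H}
    (hd : DenseRange (fun a : A => π a ξ)) {Q S : H →L[ℂ] H}
    (hQ : Q * Q = Q) (hQ1 : Q ≤ 1) (hSQ : S * Q = 0)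
    (hQc : ∀ a, Commute Q (π a)) (hSc : ∀ a, Commute S (π a)) :
    SingularR (opFn π ξ Q) (opFn π ξ S) := by
  intro p hpR hpP hp1 hp2
  have h1c : ∀ a, Commute (1 : H →L[ℂ] H) (π a) := fun a => Commute.one_left _
  obtain ⟨T, hT, hTc, rfl⟩ := exists_op hd hpR (hp1.trans ((fnLE_opFn_iff hd hQc h1c).2 hQ1))
  rw [op_eq_zero_of_le hQ hT ((fnLE_opFn_iff hd hTc hQc).1 hp1)
    ((fnLE_opFn_iff hd hTc hSc).1 hp2) hSQ]
  ext a; simp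

end LebProof

/-- **Lebesgue decomposition of representable positive functionals** (Theorem 1.4).
For representable positive functionals `f, g` on a `⋆`-algebra `A`, there is a greatest
representable positive functional `fr ≤ f` absolutely continuous with respect to `g`, and
`f - fr` is a representable positive functional singular to `g` and to `fr`. -/
theorem lebesgue_decomposition_exists
    {A : Type} [NonUnitalRing A] [Module ℂ A] [SMulCommClass ℂ A A]
    [IsScalarTower ℂ A A] [StarRing A] [StarModule ℂ A]
    (f g : A →ₗ[ℂ] ℂ) (hfR : IsRepresentable f) (hfP : IsPosFn f)
    (hgR : IsRepresentable g) (hgP : IsPosFn g) :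
    ∃ fr : A →ₗ[ℂ] ℂ,
      IsRepresentable fr ∧ IsPosFn fr ∧ FnLE fr f ∧ AbsContR fr g ∧
      (∀ f0 : A →ₗ[ℂ] ℂ, IsRepresentable f0 → IsPosFn f0 → FnLE f0 f → AbsContR f0 g →
        FnLE f0 fr) ∧
      IsRepresentable (f - fr) ∧ IsPosFn (f - fr) ∧
      SingularR (f - fr) g ∧ SingularR (f - fr) fr := by
  obtain ⟨H, _, _, _, π, ξ, hd, hfg⟩ := hfR.add hgR
  have hh : f + g = opFn π ξ 1 := by ext a; rw [hfg]; rfl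
  have h1c : ∀ a, Commute (1 : H →L[ℂ] H) (π a) := fun a => Commute.one_left _
  have hfle : FnLE f (opFn π ξ 1) := by
    rw [← hh]; intro a; simpa using hgP a
  obtain ⟨F, hF, hFc, hfF⟩ := exists_op hd hfR hfle
  have hF1 : F ≤ 1 := by rw [hfF] at hfle; exact (fnLE_opFn_iff hd hFc h1c).1 hfle
  have hgG : g = opFn π ξ (1 - F) := by
    rw [opFn_sub, ← hh, ← hfF]; abel
  have hGc : ∀ a, Commute (1 - F) (π a) := fun a => (h1c a).sub_left (hFc a)
  obtain ⟨Q, hQQ, hQsa, hFQ, hQF, hlim, hQcomm⟩ := exists_proj hF hF1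
  have hQc : ∀ a, Commute Q (π a) := fun a => hQcomm _ (hFc a)
  have hRc : ∀ a, Commute (F - Q) (π a) := fun a => (hFc a).sub_left (hQc a)
  have hQ0 : 0 ≤ Q := by
    have := star_mul_self_nonneg Q
    rwa [hQsa.star_eq, hQQ] at this
  have conj : ∀ T S : H →L[ℂ] H, T ≤ S → (1 - Q) * T * (1 - Q) ≤ (1 - Q) * S * (1 - Q) := by
    intro T S h
    have := star_left_conjugate_le_conjugate h (1 - Q)
    rwa [((IsSelfAdjoint.one _).sub hQsa).star_eq] at this
  have hconjF : (1 - Q) * F * (1 - Q) = F - Q := by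
    have : (1 - Q) * F * (1 - Q) = F - F * Q - Q * F + (Q * F) * Q := by noncomm_ring
    rw [this, hFQ, hQF, hQQ]; abel
  have hR0 : 0 ≤ F - Q := by
    rw [← hconjF]
    simpa using conj 0 F hF
  have hQleF : Q ≤ F := sub_nonneg.1 hR0
  have hQ1 : Q ≤ 1 := hQleF.trans hF1
  have hsub : f - opFn π ξ (F - Q) = opFn π ξ Q := by
    rw [opFn_sub, ← hfF]; abel
  have hGQ : (1 - F) * Q = 0 := by rw [sub_mul, one_mul, hFQ, sub_self]
  refine ⟨opFn π ξ (F - Q), isRepresentable_opFn π ξ _ hR0 hRc, isPosFn_opFn hR0 hRc, ?_, ?_, ?_,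
    ?_, ?_, ?_, ?_⟩
  · unfold FnLE; rw [hsub]; exact isPosFn_opFn hQ0 hQc
  · have hTc : ∀ n : ℕ, ∀ a, Commute (F - F ^ (n + 1)) (π a) := fun n a =>
      (hFc a).sub_left ((hFc a).pow_left _)
    have hT0 : ∀ n : ℕ, 0 ≤ F - F ^ (n + 1) := by
      intro n
      rw [sub_nonneg]
      induction n with
      | zero => simp
      | succ n ih => exact (pow_succ_le_op hF hF1 _).trans ih
    refine ⟨fun n => opFn π ξ (F - F ^ (n + 1)), fun n => n + 1,
      fun n => ⟨isRepresentable_opFn π ξ _ (hT0 n) (hTc n), isPosFn_opFn (hT0 n) (hTc n)⟩,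
      fun n => by positivity, fun n => ?_, fun n => ?_, fun a => ?_⟩
    · rw [fnLE_opFn_iff hd (hTc _) (hTc _)]
      exact sub_le_sub_left (pow_succ_le_op hF hF1 _) _
    · rw [hgG, ← opFn_smul, fnLE_opFn_iff hd (hTc _) (fun a => (hGc a).smul_left _)]
      have := sub_pow_le_op hF hF1 n
      push_cast
      exact this
    · have h1 := (hlim (π a ξ)).comp (Filter.tendsto_add_atTop_nat 1)
      have h2 : Filter.Tendsto (fun n : ℕ => ⟪ξ, F (π a ξ) - (F ^ (n + 1)) (π a ξ)⟫_ℂ)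
          Filter.atTop (nhds ⟪ξ, F (π a ξ) - Q (π a ξ)⟫_ℂ) :=
        tendsto_const_nhds.inner (tendsto_const_nhds.sub h1)
      exact h2
  · rintro f0 hf0R hf0P hf0f ⟨fn, α, hfn, hα, hmono, hdom, hconv⟩
    obtain ⟨T, hT, hTc, rfl⟩ := exists_op hd hf0R (hf0f.trans hfle)
    have hTF : T ≤ F := by rw [hfF] at hf0f; exact (fnLE_opFn_iff hd hTc hFc).1 hf0f
    have hmono' : ∀ a, Monotone fun n => fn n (star a * a) := fun a =>
      monotone_nat_of_le_succ fun n => by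
        have := hmono n a
        rwa [LinearMap.sub_apply, sub_nonneg] at this
    have hfnle : ∀ n, FnLE (fn n) (opFn π ξ T) := fun n a => by
      rw [LinearMap.sub_apply, sub_nonneg]
      exact (hmono' a).ge_of_tendsto (hconv _) n
    have hex : ∀ n, ∃ S : H →L[ℂ] H, 0 ≤ S ∧ (∀ a, Commute S (π a)) ∧ fn n = opFn π ξ S := fun n =>
      exists_op hd (hfn n).1 ((hfnle n).trans (hf0f.trans hfle))
    choose S hS0 hSc hS using hex
    have hST : ∀ n, S n ≤ T := fun n => by
      have := hfnle n
      rw [hS n] at this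
      exact (fnLE_opFn_iff hd (hSc n) hTc).1 this
    have hSG : ∀ n, S n ≤ (α n : ℂ) • (1 - F) := fun n => by
      have := hdom n
      rw [hS n, hgG, ← opFn_smul] at this
      exact (fnLE_opFn_iff hd (hSc n) (fun a => (hGc a).smul_left _)).1 this
    have hSQ : ∀ n x, (S n) (Q x) = 0 := fun n x => by
      refine op_apply_eq_zero_of_le (hS0 n) (hSG n) ?_
      have : (1 - F) (Q x) = 0 := congrArg (fun R : H →L[ℂ] H => R x) hGQ
      rw [ContinuousLinearMap.smul_apply, this, smul_zero]
    have hSconj : ∀ n, S n ≤ F - Q := fun n => by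
      have h1 : S n * Q = 0 := by ext x; exact hSQ n x
      have h2 : Q * S n = 0 := by
        have := congrArg star h1
        rwa [star_mul, hQsa.star_eq, (hS0 n).isSelfAdjoint.star_eq, star_zero] at this
      have h3 := conj _ _ ((hST n).trans hTF)
      rw [hconjF] at h3
      have h4 : (1 - Q) * S n * (1 - Q) = S n := by
        have : (1 - Q) * S n * (1 - Q) = S n - S n * Q - Q * S n + (Q * S n) * Q := by noncomm_ring
        rw [this, h1, h2]; simp
      rwa [h4] at h3
    intro a
    rw [LinearMap.sub_apply, sub_nonneg]
    refine le_of_tendsto' (hconv _) fun n => ?_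
    have := (fnLE_opFn_iff hd (hSc n) hRc).2 (hSconj n) a
    rwa [LinearMap.sub_apply, sub_nonneg, ← hS n] at this
  · rw [hsub]; exact isRepresentable_opFn π ξ Q hQ0 hQc
  · rw [hsub]; exact isPosFn_opFn hQ0 hQc
  · rw [hsub, hgG]; exact singular_opFn hd hQQ hQ1 hGQ hQc hGc
  · rw [hsub]
    exact singular_opFn hd hQQ hQ1 (by rw [sub_mul, hFQ, hQQ, sub_self]) hQc hRc
end

section
/- Let A be a *-algebra. The following statements are equivalent: (i) the Lebesgue decomposition of representable positive functionals over A is unique; (ii) for all representable positive functionals t, f, g on A, the property t ≤ f ≪ g implies t ≪ g; (iii) for all representable positive functionals f, g, p on A, the properties p ≤ f, f ≪ g and p ⊥ g imply p = 0. -/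
open scoped ComplexOrder InnerProductSpace

namespace LebAux

set_option linter.unusedSectionVars false
set_option linter.unusedSimpArgs false
set_option linter.unnecessarySimpa false

variable {A : Type} [NonUnitalRing A] [Module ℂ A] [SMulCommClass ℂ A A]
  [IsScalarTower ℂ A A] [StarRing A] [StarModule ℂ A]
variable {H : Type} [NormedAddCommGroup H] [InnerProductSpace ℂ H] [CompleteSpace H]

/-- The functional `a ↦ ⟪ξ, T (π a ξ)⟫`. -/
noncomputable def fnOf (π : A →⋆ₙₐ[ℂ] (H →L[ℂ] H)) (ξ : H) (T : H →L[ℂ] H) : A →ₗ[ℂ] ℂ where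
  toFun a := ⟪ξ, T (π a ξ)⟫_ℂ
  map_add' a b := by simp [inner_add_right]
  map_smul' c a := by simp [inner_smul_right]

/-- The orbit map. -/
noncomputable def orb (π : A →⋆ₙₐ[ℂ] (H →L[ℂ] H)) (ξ : H) : A →ₗ[ℂ] H where
  toFun a := π a ξ
  map_add' a b := by simp
  map_smul' c a := by simp

theorem fnOf_apply (π : A →⋆ₙₐ[ℂ] (H →L[ℂ] H)) (ξ : H) (T : H →L[ℂ] H) (a : A) :
    fnOf π ξ T a = ⟪ξ, T (π a ξ)⟫_ℂ := rfl

theorem orb_apply (π : A →⋆ₙₐ[ℂ] (H →L[ℂ] H)) (ξ : H) (a : A) :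
    orb π ξ a = π a ξ := rfl

theorem inner_self_nonneg_aux (x : H) : 0 ≤ ⟪x, x⟫_ℂ := by
  rw [inner_self_eq_norm_sq_to_K]
  have := Complex.zero_le_real.2 (sq_nonneg ‖x‖)
  rw [Complex.ofReal_pow] at this
  exact this

theorem inner_star_left (π : A →⋆ₙₐ[ℂ] (H →L[ℂ] H)) (a : A) (x y : H) :
    ⟪π (star a) x, y⟫_ℂ = ⟪x, π a y⟫_ℂ := by
  rw [map_star, ContinuousLinearMap.star_eq_adjoint, ContinuousLinearMap.adjoint_inner_left]

theorem inner_star_right (π : A →⋆ₙₐ[ℂ] (H →L[ℂ] H)) (a : A) (x y : H) :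
    ⟪x, π (star a) y⟫_ℂ = ⟪π a x, y⟫_ℂ := by
  rw [map_star, ContinuousLinearMap.star_eq_adjoint, ContinuousLinearMap.adjoint_inner_right]

/-- Restriction of a representation to an invariant closed subspace. -/
noncomputable def subRep (π : A →⋆ₙₐ[ℂ] (H →L[ℂ] H)) (K : Submodule ℂ H) [CompleteSpace K]
    (hK : ∀ a, ∀ x ∈ K, π a x ∈ K) : A →⋆ₙₐ[ℂ] (K →L[ℂ] K) where
  toFun a := ((π a).comp K.subtypeL).codRestrict K (fun x => hK a x x.2)
  map_zero' := by ext x; simp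
  map_add' a b := by ext x; simp; rfl
  map_smul' c a := by ext x; simp; rfl
  map_mul' a b := by ext x; simp; rfl
  map_star' a := by
    rw [ContinuousLinearMap.star_eq_adjoint, ContinuousLinearMap.eq_adjoint_iff]
    intro x y
    exact inner_star_left π a (x : H) (y : H)

theorem representable_of_vector (π : A →⋆ₙₐ[ℂ] (H →L[ℂ] H)) (ξ : H) (f : A →ₗ[ℂ] ℂ)
    (hf : ∀ a, f a = ⟪ξ, π a ξ⟫_ℂ) : IsRepresentable f ∧ IsPosFn f := by
  constructor
  · let K : Submodule ℂ H := (LinearMap.range (orb π ξ)).topologicalClosure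
    have hKc : IsClosed (K : Set H) := Submodule.isClosed_topologicalClosure _
    have : CompleteSpace K := hKc.completeSpace_coe
    have hmem : ∀ a, π a ξ ∈ K := fun a =>
      Submodule.le_topologicalClosure _ ⟨a, rfl⟩
    have hK : ∀ a, ∀ x ∈ K, π a x ∈ K := by
      intro a x hx
      have hcl : IsClosed {y : H | π a y ∈ K} := hKc.preimage (π a).continuous
      have hsub : ((LinearMap.range (orb π ξ) : Submodule ℂ H) : Set H) ⊆ {y : H | π a y ∈ K} := by
        rintro _ ⟨b, rfl⟩
        have := hmem (a * b)
        simpa [orb_apply, map_mul] using this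
      exact closure_minimal hsub hcl hx
    let η : K := K.orthogonalProjectionOnto ξ
    have hη : ∀ a, π a (η : H) = π a ξ := by
      intro a
      have h1 : ∀ y : H, π a y = 0 ↔ ∀ z, ⟪π (star a) z, y⟫_ℂ = 0 := by
        intro y
        constructor
        · intro h z; rw [inner_star_left, h, inner_zero_right]
        · intro h
          have := h (π a y)
          rw [inner_star_left] at this
          exact inner_self_eq_zero.1 this
      have h2 : π a (ξ - η) ∈ K := by
        rw [map_sub]; exact K.sub_mem (hmem a) (hK a _ η.2)
      have h3 : ⟪π a (ξ - η), π a (ξ - η)⟫_ℂ = 0 := by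
        rw [← inner_star_left]
        exact K.inner_right_of_mem_orthogonal (hK _ _ h2)
          (by simpa [η] using K.sub_starProjection_mem_orthogonal ξ)
      have h4 := inner_self_eq_zero.1 h3
      rw [map_sub, sub_eq_zero] at h4
      exact h4.symm
    refine ⟨K, inferInstance, inferInstance, inferInstance, subRep π K hK, η, ?_, ?_⟩
    · intro x
      rw [mem_closure_iff_seq_limit]
      have hx : (x : H) ∈ closure ((LinearMap.range (orb π ξ) : Submodule ℂ H) : Set H) := x.2
      obtain ⟨u, hu, hlim⟩ := mem_closure_iff_seq_limit.1 hx
      choose b hb using hu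
      refine ⟨fun n => subRep π K hK (b n) η, fun n => ⟨b n, rfl⟩, ?_⟩
      rw [tendsto_subtype_rng]
      have : (fun n => ((subRep π K hK (b n) η : K) : H)) = u := by
        funext n
        rw [← hb n, orb_apply, ← hη]; rfl
      rw [this]; exact hlim
    · intro a
      have : ⟪η, subRep π K hK a η⟫_ℂ = ⟪(η : H), π a (η : H)⟫_ℂ := rfl
      rw [this, hf, hη]
      have h5 := K.inner_left_of_mem_orthogonal (hmem a) (K.sub_starProjection_mem_orthogonal ξ)
      rw [inner_sub_left, sub_eq_zero] at h5
      simpa [η] using h5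
  · intro a
    rw [hf, map_mul, mul_apply_eq_comp, inner_star_right]
    exact inner_self_nonneg_aux _

/-- `T` lies in the commutant of `π`. -/
def Comm (π : A →⋆ₙₐ[ℂ] (H →L[ℂ] H)) (T : H →L[ℂ] H) : Prop := ∀ a, Commute T (π a)

theorem fnOf_mul {π : A →⋆ₙₐ[ℂ] (H →L[ℂ] H)} {T : H →L[ℂ] H} (hT : Comm π T) (ξ : H) (a b : A) :
    fnOf π ξ T (star b * a) = ⟪π b ξ, T (π a ξ)⟫_ℂ := by
  have := congrArg (fun S : H →L[ℂ] H => S (π a ξ)) (hT (star b)).eq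
  simp only [mul_apply_eq_comp] at this
  rw [fnOf_apply, map_mul, mul_apply_eq_comp, this, inner_star_right]

theorem fnOf_representable {π : A →⋆ₙₐ[ℂ] (H →L[ℂ] H)} {T : H →L[ℂ] H} (hT : Comm π T)
    (h0 : 0 ≤ T) (ξ : H) : IsRepresentable (fnOf π ξ T) ∧ IsPosFn (fnOf π ξ T) := by
  refine representable_of_vector π (CFC.sqrt T ξ) _ ?_
  intro a
  have hs : CFC.sqrt T * CFC.sqrt T = T := CFC.sqrt_mul_sqrt_self T h0
  have hc : Commute (CFC.sqrt T) (π a) := (hT a).cfcₙ_nnreal _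
  have hsa : star (CFC.sqrt T) = CFC.sqrt T := (CFC.sqrt_nonneg T).isSelfAdjoint
  have e1 := congrArg (fun S : H →L[ℂ] H => S ξ) hc.eq
  simp only [mul_apply_eq_comp] at e1
  rw [fnOf_apply, ← e1]
  conv_lhs => rw [← hs, mul_apply_eq_comp]
  conv_rhs => rw [← hsa, ContinuousLinearMap.star_eq_adjoint,
    ContinuousLinearMap.adjoint_inner_left, ← ContinuousLinearMap.star_eq_adjoint, hsa]

theorem fnOf_sub (π : A →⋆ₙₐ[ℂ] (H →L[ℂ] H)) (ξ : H) (S T : H →L[ℂ] H) :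
    fnOf π ξ (S - T) = fnOf π ξ S - fnOf π ξ T := by
  ext a; simp [fnOf_apply, inner_sub_right]

theorem fnOf_add (π : A →⋆ₙₐ[ℂ] (H →L[ℂ] H)) (ξ : H) (S T : H →L[ℂ] H) :
    fnOf π ξ (S + T) = fnOf π ξ S + fnOf π ξ T := by
  ext a; simp [fnOf_apply, inner_add_right]

theorem fnOf_smul (π : A →⋆ₙₐ[ℂ] (H →L[ℂ] H)) (ξ : H) (c : ℂ) (T : H →L[ℂ] H) :
    fnOf π ξ (c • T) = c • fnOf π ξ T := by
  ext a; simp [fnOf_apply, inner_smul_right]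

theorem nonneg_iff (T : H →L[ℂ] H) : 0 ≤ T ↔ ∀ x, 0 ≤ ⟪x, T x⟫_ℂ := by
  rw [ContinuousLinearMap.nonneg_iff_isPositive]
  constructor
  · intro h x; exact h.inner_nonneg_right x
  · intro h
    rw [ContinuousLinearMap.isPositive_iff_complex]
    intro x
    have hx := h x
    rw [← inner_conj_symm] at hx
    have h2 : 0 ≤ ⟪T x, x⟫_ℂ := by simpa using star_nonneg_iff.2 hx
    rw [Complex.nonneg_iff] at h2
    refine ⟨?_, h2.1⟩
    apply Complex.ext <;> simp [← h2.2]

theorem fnOf_pos_iff {π : A →⋆ₙₐ[ℂ] (H →L[ℂ] H)} {ξ : H} (hd : DenseRange (fun a => π a ξ))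
    {T : H →L[ℂ] H} (hT : Comm π T) : IsPosFn (fnOf π ξ T) ↔ 0 ≤ T := by
  rw [nonneg_iff]
  constructor
  · intro h x
    refine hd.induction_on (p := fun x => 0 ≤ ⟪x, T x⟫_ℂ) x ?_ ?_
    · exact isClosed_le continuous_const (by fun_prop)
    · intro a; simpa [fnOf_mul hT] using h a
  · intro h a; rw [fnOf_mul hT]; exact h _

theorem Comm.sub {π : A →⋆ₙₐ[ℂ] (H →L[ℂ] H)} {S T : H →L[ℂ] H} (hS : Comm π S) (hT : Comm π T) :
    Comm π (S - T) := fun a => (hS a).sub_left (hT a)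
theorem Comm.add {π : A →⋆ₙₐ[ℂ] (H →L[ℂ] H)} {S T : H →L[ℂ] H} (hS : Comm π S) (hT : Comm π T) :
    Comm π (S + T) := fun a => (hS a).add_left (hT a)
theorem Comm.mul {π : A →⋆ₙₐ[ℂ] (H →L[ℂ] H)} {S T : H →L[ℂ] H} (hS : Comm π S) (hT : Comm π T) :
    Comm π (S * T) := fun a => (hS a).mul_left (hT a)
theorem Comm.pow {π : A →⋆ₙₐ[ℂ] (H →L[ℂ] H)} {T : H →L[ℂ] H} (hT : Comm π T) (n : ℕ) :
    Comm π (T ^ n) := fun a => (hT a).pow_left n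
theorem Comm.smul {π : A →⋆ₙₐ[ℂ] (H →L[ℂ] H)} {T : H →L[ℂ] H} (hT : Comm π T) (c : ℂ) :
    Comm π (c • T) := fun a => (hT a).smul_left c
theorem Comm.one (π : A →⋆ₙₐ[ℂ] (H →L[ℂ] H)) : Comm π 1 := fun _ => Commute.one_left _

theorem fnOf_le_iff {π : A →⋆ₙₐ[ℂ] (H →L[ℂ] H)} {ξ : H} (hd : DenseRange (fun a => π a ξ))
    {S T : H →L[ℂ] H} (hS : Comm π S) (hT : Comm π T) :
    FnLE (fnOf π ξ S) (fnOf π ξ T) ↔ S ≤ T := by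
  rw [FnLE, ← fnOf_sub, fnOf_pos_iff hd (hT.sub hS), sub_nonneg]

theorem fnOf_inj {π : A →⋆ₙₐ[ℂ] (H →L[ℂ] H)} {ξ : H} (hd : DenseRange (fun a => π a ξ))
    {S T : H →L[ℂ] H} (hS : Comm π S) (hT : Comm π T) (h : fnOf π ξ S = fnOf π ξ T) :
    S = T := by
  apply le_antisymm
  · rw [← fnOf_le_iff hd hS hT, h, fnOf_le_iff hd hT hT]
  · rw [← fnOf_le_iff hd hT hS, h, fnOf_le_iff hd hT hT]

theorem radon {f p : A →ₗ[ℂ] ℂ} {π : A →⋆ₙₐ[ℂ] (H →L[ℂ] H)} {ξ : H}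
    (hd : DenseRange (fun a => π a ξ)) (hf : ∀ a, f a = ⟪ξ, π a ξ⟫_ℂ)
    (hp : IsRepresentable p) (hle : FnLE p f) :
    ∃ T : H →L[ℂ] H, Comm π T ∧ 0 ≤ T ∧ T ≤ 1 ∧ p = fnOf π ξ T := by
  obtain ⟨K, _, _, _, ρ, η, hdη, hpη⟩ := hp
  have hnorm : ∀ a, ‖orb ρ η a‖ ≤ 1 * ‖orb π ξ a‖ := by
    intro a
    have h := hle a
    rw [LinearMap.sub_apply, hf, hpη, map_mul, map_mul, mul_apply_eq_comp,
      mul_apply_eq_comp, inner_star_right, inner_star_right, 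
      inner_self_eq_norm_sq_to_K, inner_self_eq_norm_sq_to_K, sub_nonneg] at h
    have h' : ‖ρ a η‖ ^ 2 ≤ ‖π a ξ‖ ^ 2 := by exact_mod_cast h
    rw [one_mul]
    exact le_of_sq_le_sq h' (norm_nonneg _)
  let V : H →L[ℂ] K := (orb ρ η).extendOfNorm (orb π ξ)
  have hV : ∀ a, V (π a ξ) = ρ a η := fun a =>
    LinearMap.extendOfNorm_eq (f := orb ρ η) (e := orb π ξ) hd ⟨1, hnorm⟩ a
  have hVc : ∀ a x, V (π a x) = ρ a (V x) := by
    intro a x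
    refine hd.induction_on (p := fun x => V (π a x) = ρ a (V x)) x ?_ ?_
    · exact isClosed_eq (by fun_prop) (by fun_prop)
    · intro b
      have := hV (a * b)
      simp only [map_mul, mul_apply_eq_comp] at this
      rw [this, hV]
  have hVξ : V ξ = η := by
    rw [← sub_eq_zero]
    refine hdη.eq_zero_of_inner_left ℂ ?_
    intro a
    rw [← inner_star_left, map_sub, ← hVc, hV, sub_self, inner_zero_left]
  let T : H →L[ℂ] H := V.adjoint.comp V
  have hT : ∀ x y, ⟪x, T y⟫_ℂ = ⟪V x, V y⟫_ℂ := by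
    intro x y
    simp [T, ContinuousLinearMap.adjoint_inner_right]
  have hc : Comm π T := by
    intro a
    apply ContinuousLinearMap.ext
    intro x
    apply ext_inner_left ℂ
    intro y
    simp only [mul_apply_eq_comp]
    rw [hT, hVc, ← inner_star_left, ← hVc, ← hT, inner_star_left]
  have hpT : p = fnOf π ξ T := by
    ext a
    rw [fnOf_apply, hT, hVξ, hV, hpη]
  refine ⟨T, hc, ?_, ?_, hpT⟩
  · rw [nonneg_iff]
    intro x; rw [hT]; exact inner_self_nonneg_aux _
  · rw [← fnOf_le_iff hd hc (Comm.one π), ← hpT]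
    convert hle using 1
    ext a; rw [hf]; rfl

theorem representable_pos {f : A →ₗ[ℂ] ℂ} (h : IsRepresentable f) : IsPosFn f := by
  obtain ⟨K, _, _, _, ρ, η, hdη, hpη⟩ := h
  exact (representable_of_vector ρ η f hpη).2

/-- Direct sum of two representations. -/
noncomputable def sumRep {K : Type} [NormedAddCommGroup K] [InnerProductSpace ℂ K]
    [CompleteSpace K] (π : A →⋆ₙₐ[ℂ] (H →L[ℂ] H)) (ρ : A →⋆ₙₐ[ℂ] (K →L[ℂ] K)) :
    A →⋆ₙₐ[ℂ] (WithLp 2 (H × K) →L[ℂ] WithLp 2 (H × K)) where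
  toFun a := (WithLp.prodContinuousLinearEquiv 2 ℂ H K).symm.toContinuousLinearMap.comp
    (((π a).prodMap (ρ a)).comp (WithLp.prodContinuousLinearEquiv 2 ℂ H K).toContinuousLinearMap)
  map_zero' := by ext x : 1; simp; rfl
  map_add' a b := by ext x : 1; simp; rfl
  map_smul' c a := by ext x : 1; simp; rfl
  map_mul' a b := by ext x : 1; simp; rfl
  map_star' a := by
    rw [ContinuousLinearMap.star_eq_adjoint, ContinuousLinearMap.eq_adjoint_iff]
    intro x y
    rw [WithLp.prod_inner_apply, WithLp.prod_inner_apply]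
    exact congrArg₂ (· + ·) (inner_star_left π a _ _) (inner_star_left ρ a _ _)

theorem rep_add {f g : A →ₗ[ℂ] ℂ} (hf : IsRepresentable f) (hg : IsRepresentable g) :
    IsRepresentable (f + g) := by
  obtain ⟨H, _, _, _, π, ξ, _, hf⟩ := hf
  obtain ⟨K, _, _, _, ρ, η, _, hg⟩ := hg
  refine (representable_of_vector (sumRep π ρ) (WithLp.toLp 2 (ξ, η)) _ ?_).1
  intro a
  rw [WithLp.prod_inner_apply, LinearMap.add_apply, hf, hg]
  rfl

theorem rep_smul {f : A →ₗ[ℂ] ℂ} (hf : IsRepresentable f) {c : ℝ} (hc : 0 ≤ c) :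
    IsRepresentable ((c : ℂ) • f) := by
  obtain ⟨H, _, _, _, π, ξ, _, hf⟩ := hf
  refine (representable_of_vector π (((Real.sqrt c : ℝ) : ℂ) • ξ) _ ?_).1
  intro a
  rw [map_smul, inner_smul_left, inner_smul_right, LinearMap.smul_apply, hf, smul_eq_mul,
    Complex.conj_ofReal, ← mul_assoc, ← Complex.ofReal_mul, Real.mul_self_sqrt hc]

theorem rep_zero : IsRepresentable (0 : A →ₗ[ℂ] ℂ) := by
  refine (representable_of_vector (H := ℂ) 0 0 _ ?_).1
  intro a; simp

theorem le_refl' (f : A →ₗ[ℂ] ℂ) : FnLE f f := by intro a; simp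

theorem le_trans' {f g h : A →ₗ[ℂ] ℂ} (h1 : FnLE f g) (h2 : FnLE g h) : FnLE f h := by
  intro a
  have := add_nonneg (h1 a) (h2 a)
  simpa using this

theorem le_add_left' {f g : A →ₗ[ℂ] ℂ} (h : IsPosFn g) : FnLE f (g + f) := by
  intro a; simpa using h a

theorem le_add_right' {f g : A →ₗ[ℂ] ℂ} (h : IsPosFn g) : FnLE f (f + g) := by
  intro a; simpa using h a

theorem le_add_add' {f g f' g' : A →ₗ[ℂ] ℂ} (h : FnLE f g) (h' : FnLE f' g') :
    FnLE (f + f') (g + g') := by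
  intro a
  have := add_nonneg (h a) (h' a)
  simp only [LinearMap.sub_apply, LinearMap.add_apply] at *
  convert this using 1; ring

theorem le_smul' {f g : A →ₗ[ℂ] ℂ} (h : FnLE f g) {c : ℝ} (hc : 0 ≤ c) :
    FnLE ((c : ℂ) • f) ((c : ℂ) • g) := by
  intro a
  have hc' : (0 : ℂ) ≤ c := by exact_mod_cast hc
  have := mul_nonneg hc' (h a)
  simpa [mul_sub] using this

theorem smul_le' {f : A →ₗ[ℂ] ℂ} (h : IsPosFn f) {c d : ℝ} (hc : c ≤ d) :
    FnLE ((c : ℂ) • f) ((d : ℂ) • f) := by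
  intro a
  have hc' : (0 : ℂ) ≤ (d : ℂ) - c := by exact_mod_cast sub_nonneg.2 hc
  have := mul_nonneg hc' (h a)
  simpa [sub_mul] using this

theorem le_of_limit {f : A →ₗ[ℂ] ℂ} {fn : ℕ → (A →ₗ[ℂ] ℂ)}
    (hmono : ∀ n, FnLE (fn n) (fn (n + 1)))
    (hlim : ∀ a : A, Filter.Tendsto (fun n => fn n a) Filter.atTop (nhds (f a))) (n : ℕ) :
    FnLE (fn n) f := by
  have hm : ∀ k, FnLE (fn n) (fn (n + k)) := by
    intro k
    induction k with
    | zero => exact le_refl' _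
    | succ k ih => exact le_trans' ih (hmono _)
  intro a
  have h1 : Filter.Tendsto (fun k => fn (n + k) (star a * a) - fn n (star a * a)) Filter.atTop
      (nhds (f (star a * a) - fn n (star a * a))) := by
    have := (Filter.tendsto_add_atTop_iff_nat n).2 (hlim (star a * a))
    simp only [add_comm _ n] at this
    exact this.sub_const _
  exact ge_of_tendsto' h1 (fun k => hm k a)

theorem absCont_add {f f' g : A →ₗ[ℂ] ℂ} (h : AbsContR f g) (h' : AbsContR f' g) :
    AbsContR (f + f') g := by
  obtain ⟨u, α, h1, h2, h3, h4, h5⟩ := h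
  obtain ⟨u', α', h1', h2', h3', h4', h5'⟩ := h'
  refine ⟨fun n => u n + u' n, fun n => α n + α' n, ?_, ?_, ?_, ?_, ?_⟩
  · intro n
    have := rep_add (h1 n).1 (h1' n).1
    exact ⟨this, representable_pos this⟩
  · intro n; exact add_pos (h2 n) (h2' n)
  · intro n; exact le_add_add' (h3 n) (h3' n)
  · intro n
    have := le_add_add' (h4 n) (h4' n)
    simpa [add_smul] using this
  · intro a; exact (h5 a).add (h5' a)

theorem eq_zero_of_absCont_singular {p g : A →ₗ[ℂ] ℂ} (h : AbsContR p g) (hs : SingularR p g) :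
    p = 0 := by
  obtain ⟨u, α, h1, h2, h3, h4, h5⟩ := h
  have hz : ∀ n, u n = 0 := by
    intro n
    have hb : (0 : ℝ) < 1 + α n := by linarith [h2 n]
    have hr := rep_smul (h1 n).1 (inv_nonneg.2 hb.le)
    have hle := le_of_limit h3 h5 n
    have e1 : FnLE ((((1 + α n)⁻¹ : ℝ) : ℂ) • u n) (u n) := by
      have := smul_le' (h1 n).2 (c := (1 + α n)⁻¹) (d := 1)
        (inv_le_one_of_one_le₀ (by linarith [h2 n]))
      simpa using this
    have hgpos : IsPosFn g := by
      intro a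
      have := add_nonneg (h4 n a) ((h1 n).2 a)
      simp only [LinearMap.sub_apply, sub_add_cancel, LinearMap.smul_apply, smul_eq_mul] at this
      have hi : (0 : ℂ) ≤ (((α n)⁻¹ : ℝ) : ℂ) := by exact_mod_cast (inv_nonneg.2 (h2 n).le)
      have h6 := mul_nonneg hi this
      rw [← mul_assoc, ← Complex.ofReal_mul, inv_mul_cancel₀ (h2 n).ne'] at h6
      simpa using h6
    have e2 : FnLE ((((1 + α n)⁻¹ : ℝ) : ℂ) • u n) g := by
      have h7 := le_smul' (le_trans' (h4 n) (smul_le' hgpos (d := 1 + α n) (by linarith)))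
        (inv_nonneg.2 hb.le)
      rw [smul_smul, ← Complex.ofReal_mul, inv_mul_cancel₀ hb.ne'] at h7
      simpa using h7
    have h8 := hs _ hr (representable_pos hr) (le_trans' e1 hle) e2
    rcases smul_eq_zero.1 h8 with h9 | h9
    · exact absurd (by exact_mod_cast h9) (inv_pos.2 hb).ne'
    · exact h9
  ext a
  have := h5 a
  simp only [hz, LinearMap.zero_apply] at this
  exact tendsto_nhds_unique this tendsto_const_nhds

theorem absCont_zero (g : A →ₗ[ℂ] ℂ) (hg : IsPosFn g) : AbsContR 0 g := by
  refine ⟨fun _ => 0, fun _ => 1, fun n => ⟨rep_zero, representable_pos rep_zero⟩,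
    fun _ => one_pos, fun n => le_refl' _, fun n a => by simpa using hg a, fun a => ?_⟩
  exact tendsto_const_nhds

theorem singular_zero (g : A →ₗ[ℂ] ℂ) : SingularR 0 g := by
  intro p hp _ h0 _
  obtain ⟨H, _, _, _, π, ξ, hd, hf⟩ := hp
  have h : ∀ a, π a ξ = 0 := by
    intro a
    have := h0 a
    rw [zero_sub, LinearMap.neg_apply, hf, map_mul, mul_apply_eq_comp, inner_star_right,
      inner_self_eq_norm_sq_to_K] at this
    have h' : 0 ≤ -‖π a ξ‖ ^ 2 := by
      apply Complex.zero_le_real.1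
      rw [Complex.ofReal_neg, Complex.ofReal_pow]
      exact this
    have : ‖π a ξ‖ = 0 := by nlinarith [norm_nonneg (π a ξ)]
    simpa using this
  ext a; rw [hf, h]; simp

theorem singular_mono {p q g : A →ₗ[ℂ] ℂ} (h : SingularR q g) (hle : FnLE p q) : SingularR p g :=
  fun r hr hr' h1 h2 => h r hr hr' (le_trans' h1 hle) h2

section Powers

variable {T : H →L[ℂ] H}

theorem pow_nonneg_aux (h0 : 0 ≤ T) (n : ℕ) : 0 ≤ T ^ n := by
  induction n with
  | zero => simpa using (nonneg_iff (1 : H →L[ℂ] H)).2 (fun x => inner_self_nonneg_aux x)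
  | succ n ih =>
    rw [pow_succ]
    exact Commute.mul_nonneg ih h0 (Commute.pow_self T n)

theorem pow_mul_nonneg (h0 : 0 ≤ T) (h1 : T ≤ 1) (n : ℕ) : 0 ≤ T ^ n * (1 - T) :=
  Commute.mul_nonneg (pow_nonneg_aux h0 n) (sub_nonneg.2 h1)
    ((Commute.one_right _).sub_right (Commute.pow_self T n))

theorem pow_le_one_aux (h0 : 0 ≤ T) (h1 : T ≤ 1) (n : ℕ) : T ^ n ≤ 1 := by
  induction n with
  | zero => simp
  | succ n ih =>
    have := pow_mul_nonneg h0 h1 n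
    rw [mul_sub, mul_one, ← pow_succ, sub_nonneg] at this
    exact this.trans ih

theorem sub_pow_le (h0 : 0 ≤ T) (h1 : T ≤ 1) (n : ℕ) :
    T - T ^ (n + 1) ≤ (n : ℝ) • (1 - T) := by
  induction n with
  | zero => simp
  | succ n ih =>
    have hc : Commute (1 - T ^ (n + 1)) (1 - T) :=
      ((Commute.one_left _).sub_left ((Commute.one_right _).sub_right (Commute.pow_self T _)))
    have h2 : 0 ≤ (1 - T ^ (n + 1)) * (1 - T) :=
      Commute.mul_nonneg (sub_nonneg.2 (pow_le_one_aux h0 h1 _)) (sub_nonneg.2 h1) hc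
    have h3 := add_nonneg (sub_nonneg.2 ih) h2
    rw [← sub_nonneg]
    convert h3 using 1
    push_cast
    rw [add_smul, one_smul, pow_succ T (n + 1)]
    noncomm_ring

theorem norm_pow_apply_le (h0 : 0 ≤ T) (h1 : T ≤ 1) (n : ℕ) (x : H) : ‖(T ^ n) x‖ ≤ ‖x‖ := by
  have h2 : ‖T ^ n‖ ≤ 1 :=
    (CStarAlgebra.norm_le_one_iff_of_nonneg (T ^ n) (pow_nonneg_aux h0 n)).2
      (pow_le_one_aux h0 h1 n)
  calc ‖(T ^ n) x‖ ≤ ‖T ^ n‖ * ‖x‖ := (T ^ n).le_opNorm x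
    _ ≤ 1 * ‖x‖ := by gcongr
    _ = ‖x‖ := one_mul _

theorem tendsto_pow_sub (h0 : 0 ≤ T) (h1 : T ≤ 1) (x : H) :
    Filter.Tendsto (fun n => (T ^ n) ((1 - T) x)) Filter.atTop (nhds 0) := by
  have hsa : ∀ n, star (T ^ n) = T ^ n := fun n => (pow_nonneg_aux h0 n).isSelfAdjoint
  have hin : ∀ n (y z : H), ⟪(T ^ n) y, z⟫_ℂ = ⟪y, (T ^ n) z⟫_ℂ := by
    intro n y z
    conv_lhs => rw [← hsa n, ContinuousLinearMap.star_eq_adjoint,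
      ContinuousLinearMap.adjoint_inner_left]
  let c : ℕ → ℝ := fun n => (⟪x, (T ^ n) x⟫_ℂ).re
  have hc0 : ∀ n, 0 ≤ c n := fun n =>
    (Complex.nonneg_iff.1 ((nonneg_iff _).1 (pow_nonneg_aux h0 n) x)).1
  have hanti : Antitone c := by
    apply antitone_nat_of_succ_le
    intro n
    have h := (Complex.nonneg_iff.1 ((nonneg_iff _).1 (pow_mul_nonneg h0 h1 n) x)).1
    rw [mul_sub, mul_one, ← pow_succ, sub_apply, inner_sub_right,
      Complex.sub_re] at h
    simpa [c] using h
  have hlim := tendsto_atTop_ciInf hanti ⟨0, by rintro _ ⟨n, rfl⟩; exact hc0 n⟩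
  set l := ⨅ i, c i
  have hnorm : ∀ n, ‖(T ^ n) ((1 - T) x)‖ ^ 2 = c (2 * n) - 2 * c (2 * n + 1) + c (2 * n + 2) := by
    intro n
    have e1 : ‖(T ^ n) ((1 - T) x)‖ ^ 2
        = (⟪(T ^ n) ((1 - T) x), (T ^ n) ((1 - T) x)⟫_ℂ).re := by
      rw [inner_self_eq_norm_sq_to_K]
      norm_cast
    have e2 : (T ^ n) ((1 - T) x) = (T ^ n) x - (T ^ (n + 1)) x := by
      rw [pow_succ]; simp
    rw [e1, e2]
    simp only [inner_sub_left, inner_sub_right, hin, ← mul_apply_eq_comp, ← pow_add]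
    simp only [Complex.sub_re, c]
    have i1 : n + n = 2 * n := by ring
    have i2 : n + (n + 1) = 2 * n + 1 := by ring
    have i3 : n + 1 + n = 2 * n + 1 := by ring
    have i4 : n + 1 + (n + 1) = 2 * n + 2 := by ring
    rw [i1, i2, i3, i4]
    ring
  have ht : Filter.Tendsto (fun n : ℕ => 2 * n) Filter.atTop Filter.atTop :=
    Filter.tendsto_atTop_mono (fun n => by simp only [id]; omega) Filter.tendsto_id
  have hlimk : ∀ k, Filter.Tendsto (fun n : ℕ => c (2 * n + k)) Filter.atTop (nhds l) := fun k =>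
    hlim.comp (Filter.tendsto_atTop_mono (fun n => Nat.le_add_right _ k) ht)
  have hsq : Filter.Tendsto (fun n => ‖(T ^ n) ((1 - T) x)‖ ^ 2) Filter.atTop (nhds 0) := by
    have := ((hlimk 0).sub ((hlimk 1).const_mul 2)).add (hlimk 2)
    have hz : l - 2 * l + l = 0 := by ring
    rw [hz] at this
    refine this.congr (fun n => ?_)
    rw [hnorm]; rfl
  rw [tendsto_zero_iff_norm_tendsto_zero]
  have := hsq.sqrt
  simpa [Real.sqrt_sq] using this

theorem tendsto_pow_proj (h0 : 0 ≤ T) (h1 : T ≤ 1) (x : H) :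
    Filter.Tendsto (fun n => (T ^ n) x) Filter.atTop
      (nhds ((1 - T).ker.starProjection x)) := by
  have hsa : star (1 - T) = 1 - T := (sub_nonneg.2 h1).isSelfAdjoint
  set K := (1 - T).ker with hK
  set P := K.starProjection
  have hfix : ∀ n, (T ^ n) (P x) = P x := by
    have hm : P x ∈ K := K.starProjection_apply_mem x
    have hT : T (P x) = P x := by
      have : (1 - T) (P x) = 0 := hm
      rw [sub_apply, sub_eq_zero] at this
      exact this.symm
    intro n
    induction n with
    | zero => simp
    | succ n ih => rw [pow_succ, mul_apply_eq_comp, hT, ih]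
  have hort : x - P x ∈ ((1 - T).range).topologicalClosure := by
    have h2 : x - P x ∈ Kᗮ := K.sub_starProjection_mem_orthogonal x
    rw [hK, ContinuousLinearMap.orthogonal_ker, ← ContinuousLinearMap.star_eq_adjoint, hsa] at h2
    exact h2
  have hz : Filter.Tendsto (fun n => (T ^ n) (x - P x)) Filter.atTop (nhds 0) := by
    rw [Metric.tendsto_atTop]
    intro ε hε
    obtain ⟨_, ⟨z, rfl⟩, hd⟩ := Metric.mem_closure_iff.1 hort (ε / 2) (by linarith)
    obtain ⟨N, hN⟩ := Metric.tendsto_atTop.1 (tendsto_pow_sub h0 h1 z) (ε / 2) (by linarith)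
    refine ⟨N, fun n hn => ?_⟩
    have h3 := hN n hn
    rw [dist_zero_right] at h3 ⊢
    have h4 : (T ^ n) (x - P x) = (T ^ n) (x - P x - (1 - T) z) + (T ^ n) ((1 - T) z) := by
      rw [← map_add, sub_add_cancel]
    rw [h4]
    have h5 := norm_pow_apply_le h0 h1 n (x - P x - (1 - T) z)
    rw [dist_eq_norm] at hd
    have h6 := norm_add_le ((T ^ n) (x - P x - (1 - T) z)) ((T ^ n) ((1 - T) z))
    have hd' : ‖x - P x - (1 - T) z‖ < ε / 2 := hd
    linarith
  have := hz.add_const (P x)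
  rw [zero_add] at this
  refine this.congr (fun n => ?_)
  rw [map_sub, hfix, sub_add_cancel]

end Powers

/-- Projection onto the fixed space of `T`. -/
noncomputable def fixProj (T : H →L[ℂ] H) : H →L[ℂ] H := (1 - T).ker.starProjection

theorem tendsto_fixProj {T : H →L[ℂ] H} (h0 : 0 ≤ T) (h1 : T ≤ 1) (x : H) :
    Filter.Tendsto (fun n => (T ^ n) x) Filter.atTop (nhds (fixProj T x)) :=
  tendsto_pow_proj h0 h1 x

theorem fixProj_comm {π : A →⋆ₙₐ[ℂ] (H →L[ℂ] H)} {T : H →L[ℂ] H} (hT : Comm π T)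
    (h0 : 0 ≤ T) (h1 : T ≤ 1) : Comm π (fixProj T) := by
  intro a
  apply ContinuousLinearMap.ext
  intro x
  rw [mul_apply_eq_comp, mul_apply_eq_comp]
  have l1 := tendsto_fixProj h0 h1 (π a x)
  have l2 := ((π a).continuous.tendsto _).comp (tendsto_fixProj h0 h1 x)
  refine tendsto_nhds_unique l1 (l2.congr (fun n => ?_))
  have := congrArg (fun S : H →L[ℂ] H => S x) ((hT.pow n) a).eq
  simpa only [mul_apply_eq_comp, Function.comp] using this.symm

theorem fixProj_nonneg {T : H →L[ℂ] H} (h0 : 0 ≤ T) (h1 : T ≤ 1) : 0 ≤ fixProj T := by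
  rw [nonneg_iff]
  intro x
  have l : Filter.Tendsto (fun n => ⟪x, (T ^ n) x⟫_ℂ) Filter.atTop (nhds ⟪x, fixProj T x⟫_ℂ) :=
    tendsto_const_nhds.inner (tendsto_fixProj h0 h1 x)
  exact ge_of_tendsto' l (fun n => (nonneg_iff _).1 (pow_nonneg_aux h0 n) x)

theorem sub_pow_nonneg {T : H →L[ℂ] H} (h0 : 0 ≤ T) (h1 : T ≤ 1) (n : ℕ) :
    0 ≤ T - T ^ (n + 1) := by
  have := Commute.mul_nonneg h0 (sub_nonneg.2 (pow_le_one_aux h0 h1 n))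
    ((Commute.one_right _).sub_right (Commute.self_pow T n))
  rwa [mul_sub, mul_one, ← pow_succ'] at this

theorem tendsto_sub_pow {T : H →L[ℂ] H} (h0 : 0 ≤ T) (h1 : T ≤ 1) (x : H) :
    Filter.Tendsto (fun n => (T - T ^ (n + 1)) x) Filter.atTop (nhds ((T - fixProj T) x)) := by
  have l := (Filter.tendsto_add_atTop_iff_nat 1).2 (tendsto_fixProj h0 h1 x)
  simp only [sub_apply]
  exact l.const_sub _

theorem fixProj_le {T : H →L[ℂ] H} (h0 : 0 ≤ T) (h1 : T ≤ 1) : 0 ≤ T - fixProj T := by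
  rw [nonneg_iff]
  intro x
  have l : Filter.Tendsto (fun n => ⟪x, (T - T ^ (n + 1)) x⟫_ℂ) Filter.atTop
      (nhds ⟪x, (T - fixProj T) x⟫_ℂ) :=
    tendsto_const_nhds.inner (tendsto_sub_pow h0 h1 x)
  exact ge_of_tendsto' l (fun n => (nonneg_iff _).1 (sub_pow_nonneg h0 h1 n) x)

theorem absCont_core {π : A →⋆ₙₐ[ℂ] (H →L[ℂ] H)} {ξ : H} (hd : DenseRange (fun a => π a ξ))
    {T : H →L[ℂ] H} (hT : Comm π T) (h0 : 0 ≤ T) (h1 : T ≤ 1) :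
    AbsContR (fnOf π ξ (T - fixProj T)) (fnOf π ξ (1 - T)) := by
  have hc : ∀ n, Comm π (T - T ^ (n + 1)) := fun n => hT.sub (hT.pow _)
  have hG : Comm π (1 - T) := (Comm.one π).sub hT
  refine ⟨fun n => fnOf π ξ (T - T ^ (n + 1)), fun n => (n : ℝ) + 1, ?_, ?_, ?_, ?_, ?_⟩
  · intro n; exact fnOf_representable (hc n) (sub_pow_nonneg h0 h1 n) ξ
  · intro n; positivity
  · intro n
    rw [fnOf_le_iff hd (hc n) (hc (n + 1))]
    have := pow_mul_nonneg h0 h1 (n + 1)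
    rw [mul_sub, mul_one, ← pow_succ, sub_nonneg] at this
    exact sub_le_sub_left this _
  · intro n
    rw [← fnOf_smul, fnOf_le_iff hd (hc n) (hG.smul _)]
    refine (sub_pow_le h0 h1 n).trans ?_
    rw [← sub_nonneg]
    convert sub_nonneg.2 h1 using 1
    ext x
    simp only [Complex.ofReal_add, Complex.ofReal_natCast, Complex.ofReal_one, add_smul,
      Nat.cast_smul_eq_nsmul, one_smul, add_sub_cancel_left]
  · intro a
    exact tendsto_const_nhds.inner (tendsto_sub_pow h0 h1 (π a ξ))

theorem setup {t g : A →ₗ[ℂ] ℂ} (ht : IsRepresentable t) (hg : IsRepresentable g) :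
    ∃ (H : Type) (_ : NormedAddCommGroup H) (_ : InnerProductSpace ℂ H) (_ : CompleteSpace H)
      (π : A →⋆ₙₐ[ℂ] (H →L[ℂ] H)) (ξ : H) (T : H →L[ℂ] H), DenseRange (fun a => π a ξ) ∧
      Comm π T ∧ 0 ≤ T ∧ T ≤ 1 ∧ t = fnOf π ξ T ∧ g = fnOf π ξ (1 - T) ∧
      ∀ a, (t + g) a = ⟪ξ, π a ξ⟫_ℂ := by
  obtain ⟨H, _, _, _, π, ξ, hd, hf⟩ := rep_add ht hg
  obtain ⟨T, hT, h0, h1, e⟩ := radon hd hf ht (le_add_right' (representable_pos hg))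
  refine ⟨H, _, _, _, π, ξ, T, hd, hT, h0, h1, e, ?_, hf⟩
  ext a
  have := hf a
  rw [fnOf_sub, ← e, LinearMap.sub_apply, fnOf_apply]
  rw [LinearMap.add_apply] at this
  rw [one_apply_eq_self, ← this]; ring

theorem conj_eq_zero {S T : H →L[ℂ] H} (hT : 0 ≤ T) (hS : star S = S) (h : S * T * S = 0) :
    T * S = 0 := by
  have hs : CFC.sqrt T * CFC.sqrt T = T := CFC.sqrt_mul_sqrt_self T hT
  have hsa : star (CFC.sqrt T) = CFC.sqrt T := (CFC.sqrt_nonneg T).isSelfAdjoint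
  have : star (CFC.sqrt T * S) * (CFC.sqrt T * S) = 0 := by
    rw [star_mul, hsa, hS, ← h]
    nth_rewrite 3 [← hs]
    simp only [mul_assoc]
  rw [CStarRing.star_mul_self_eq_zero_iff] at this
  rw [← hs, mul_assoc, this, mul_zero]

/-- Existence of the Lebesgue decomposition. -/
theorem exists_decomp {t g : A →ₗ[ℂ] ℂ} (ht : IsRepresentable t) (hg : IsRepresentable g) :
    ∃ r s, IsLebDecompR t g r s := by
  obtain ⟨H, _, _, _, π, ξ, T, hd, hT, h0, h1, et, eg, hw⟩ := setup ht hg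
  have hP := fixProj_comm hT h0 h1
  have hP0 := fixProj_nonneg h0 h1
  have r1 := fnOf_representable (hT.sub hP) (fixProj_le h0 h1) ξ
  have r2 := fnOf_representable hP hP0 ξ
  refine ⟨fnOf π ξ (T - fixProj T), fnOf π ξ (fixProj T), r1.1, r1.2, r2.1, r2.2, ?_, ?_, ?_⟩
  · rw [← fnOf_add, sub_add_cancel, et]
  · rw [eg]; exact absCont_core hd hT h0 h1
  · intro q hq hq' hq1 hq2
    obtain ⟨S, hS, hS0, hS1, e⟩ := radon hd hw hq
      (le_trans' hq2 (le_add_left' (representable_pos ht)))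
    rw [eg, e, fnOf_le_iff hd hS ((Comm.one π).sub hT)] at hq2
    rw [e, fnOf_le_iff hd hS hP] at hq1
    have hPP : fixProj T * fixProj T = fixProj T :=
      (Submodule.isIdempotentElem_starProjection _)
    have hGP : (1 - T) * fixProj T = 0 := by
      ext x
      have : fixProj T x ∈ (1 - T).ker := Submodule.starProjection_apply_mem _ x
      exact this
    have hPsa : star (fixProj T) = fixProj T := hP0.isSelfAdjoint
    have hSsa : star S = S := hS0.isSelfAdjoint
    -- `S` vanishes on the range of `P`
    have z1 : fixProj T * S * fixProj T = 0 := by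
      apply le_antisymm
      · have := IsSelfAdjoint.conjugate_nonneg (sub_nonneg.2 hq2) hPsa
        rw [mul_sub, sub_mul, mul_assoc _ (1 - T), hGP, mul_zero, sub_nonneg] at this
        exact this
      · exact IsSelfAdjoint.conjugate_nonneg hS0 hPsa
    have z2 : S * fixProj T = 0 := conj_eq_zero hS0 hPsa z1
    -- `S` vanishes on the kernel of `P`
    have hQsa : star (1 - fixProj T) = 1 - fixProj T := by rw [star_sub, star_one, hPsa]
    have z3 : (1 - fixProj T) * S * (1 - fixProj T) = 0 := by
      apply le_antisymm
      · have := IsSelfAdjoint.conjugate_nonneg (sub_nonneg.2 hq1) hQsa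
        have hQP : (1 - fixProj T) * fixProj T = 0 := by
          rw [sub_mul, one_mul, hPP, sub_self]
        rw [mul_sub (1 - fixProj T) (fixProj T) S, hQP, zero_sub, neg_mul, neg_nonneg] at this
        exact this
      · exact IsSelfAdjoint.conjugate_nonneg hS0 hQsa
    have z4 : S * (1 - fixProj T) = 0 := conj_eq_zero hS0 hQsa z3
    rw [mul_sub, z2, mul_one, sub_zero] at z4
    rw [e, z4]; ext a; simp [fnOf_apply]

theorem sq_le_inner {S : H →L[ℂ] H} (h0 : 0 ≤ S) (h1 : S ≤ 1) (x : H) :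
    ‖S x‖ ^ 2 ≤ (⟪x, S x⟫_ℂ).re := by
  have hsa : star S = S := h0.isSelfAdjoint
  have h2 : 0 ≤ S * (1 - S) := Commute.mul_nonneg h0 (sub_nonneg.2 h1)
    ((Commute.one_right _).sub_right (Commute.refl S))
  have h3 := (Complex.nonneg_iff.1 ((nonneg_iff _).1 h2 x)).1
  have h4 : ⟪x, S (S x)⟫_ℂ = ⟪S x, S x⟫_ℂ := by
    conv_lhs => rw [← hsa, ContinuousLinearMap.star_eq_adjoint,
      ContinuousLinearMap.adjoint_inner_right, ← ContinuousLinearMap.star_eq_adjoint, hsa]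
  have e1 : ‖S x‖ ^ 2 = (⟪S x, S x⟫_ℂ).re := by
    rw [inner_self_eq_norm_sq_to_K]
    norm_cast
  rw [mul_sub, mul_one, sub_apply, mul_apply_eq_comp, inner_sub_right, h4, Complex.sub_re,
    ← e1] at h3
  linarith

/-- If `f ≪ g` and `f ≤ h ≤ 2 f` with `h = f + p`, then `h ≪ g`. -/
theorem absCont_add_of_le {f g p : A →ₗ[ℂ] ℂ} (hf : IsRepresentable f) (hg : IsRepresentable g)
    (hp : IsRepresentable p) (hle : FnLE p f) (hac : AbsContR f g) : AbsContR (f + p) g := by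
  have hh := rep_add hf hp
  obtain ⟨H, _, _, _, π, ξ, T, hd, hT, h0, h1, et, eg, hw⟩ := setup hh hg
  have hfw : FnLE f (f + p + g) := le_trans' (le_add_right' (representable_pos hp))
    (le_add_right' (representable_pos hg))
  obtain ⟨F, hF, hF0, hF1, eF⟩ := radon hd hw hf hfw
  have hTF : T ≤ F + F := by
    rw [← fnOf_le_iff hd hT (hF.add hF), ← et, fnOf_add, ← eF]
    exact le_add_add' (le_refl' f) hle
  obtain ⟨u, α, h1u, h2, h3, h4, h5⟩ := hac
  have hker : ∀ x, (1 - T) x = 0 → x = 0 := by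
    intro x hx
    have hTx : T x = x := by
      rw [sub_apply, sub_eq_zero] at hx
      exact hx.symm
    have key : ∀ a, ⟪F x, π a ξ⟫_ℂ = 0 := by
      intro a
      have huf : ∀ n, FnLE (u n) f := le_of_limit h3 h5
      have hU := fun n => radon hd hw (h1u n).1 (le_trans' (huf n) hfw)
      choose U hUc hU0 hU1 hUe using hU
      have hUx : ∀ n, U n x = 0 := by
        intro n
        have h7 := h4 n
        rw [hUe, eg, ← fnOf_smul, fnOf_le_iff hd (hUc n) (((Comm.one π).sub hT).smul _),
          ← sub_nonneg, nonneg_iff] at h7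
        have h8 := (Complex.nonneg_iff.1 (h7 x)).1
        rw [sub_apply, smul_apply, hx, smul_zero, zero_sub, inner_neg_right,
          Complex.neg_re] at h8
        have h9 := sq_le_inner (hU0 n) (hU1 n) x
        have : ‖U n x‖ = 0 := by nlinarith [norm_nonneg (U n x)]
        simpa using this
      have hD0 : ∀ n, 0 ≤ F - U n := by
        intro n
        rw [sub_nonneg, ← fnOf_le_iff hd (hUc n) hF, ← hUe, ← eF]
        exact huf n
      have hD1 : ∀ n, F - U n ≤ 1 := fun n => (sub_le_self _ (hU0 n)).trans hF1
      have hre : ∀ n, ‖(F - U n) (π a ξ)‖ ^ 2 ≤ (f (star a * a) - u n (star a * a)).re := by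
        intro n
        refine (sq_le_inner (hD0 n) (hD1 n) (π a ξ)).trans (le_of_eq ?_)
        rw [← fnOf_mul (hF.sub (hUc n)), fnOf_sub, ← eF, ← hUe, LinearMap.sub_apply]
      have hl : Filter.Tendsto (fun n => (f (star a * a) - u n (star a * a)).re) Filter.atTop
          (nhds 0) := by
        have := (Complex.continuous_re.tendsto _).comp ((h5 (star a * a)).const_sub (f (star a * a)))
        rw [sub_self, Complex.zero_re] at this
        exact this
      have hsq := squeeze_zero (fun n => sq_nonneg _) hre hl
      have hs := hsq.sqrt
      simp only [Real.sqrt_sq (norm_nonneg _), Real.sqrt_zero] at hs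
      have hs0 := tendsto_zero_iff_norm_tendsto_zero.2 hs
      have hin : ∀ n, ⟪x, (F - U n) (π a ξ)⟫_ℂ = ⟪F x, π a ξ⟫_ℂ := by
        intro n
        have hsa : star (F - U n) = F - U n := (hD0 n).isSelfAdjoint
        rw [← hsa, ContinuousLinearMap.star_eq_adjoint,
          ContinuousLinearMap.adjoint_inner_right, sub_apply, hUx, sub_zero]
      have hfin : Filter.Tendsto (fun n => ⟪x, (F - U n) (π a ξ)⟫_ℂ) Filter.atTop
          (nhds ⟪x, (0 : H)⟫_ℂ) := tendsto_const_nhds.inner hs0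
      simp only [hin, inner_zero_right] at hfin
      exact tendsto_nhds_unique tendsto_const_nhds hfin
    have hFx : F x = 0 := hd.eq_zero_of_inner_left ℂ key
    have h6 := (nonneg_iff _).1 (sub_nonneg.2 hTF) x
    rw [sub_apply, add_apply, hFx, hTx, add_zero, zero_sub, inner_neg_right,
      inner_self_eq_norm_sq_to_K] at h6
    have h' : 0 ≤ -‖x‖ ^ 2 := by
      apply Complex.zero_le_real.1
      rw [Complex.ofReal_neg, Complex.ofReal_pow]
      exact h6
    have : ‖x‖ = 0 := by nlinarith [norm_nonneg x]
    simpa using this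
  have hP : fixProj T = 0 := by
    ext x
    have : fixProj T x ∈ (1 - T).ker := Submodule.starProjection_apply_mem _ x
    exact hker _ this
  have := absCont_core hd hT h0 h1
  rw [hP, sub_zero, ← et, ← eg] at this
  exact this

/-- The key inclusion step for uniqueness. -/
theorem unique_step {S T : H →L[ℂ] H} {π : A →⋆ₙₐ[ℂ] (H →L[ℂ] H)} {ξ : H}
    (hd : DenseRange (fun a => π a ξ)) {g : A →ₗ[ℂ] ℂ} (hg : IsRepresentable g)
    (h3 : ∀ f g p : A →ₗ[ℂ] ℂ,
          IsRepresentable f → IsPosFn f → IsRepresentable g → IsPosFn g →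
          IsRepresentable p → IsPosFn p →
          FnLE p f → AbsContR f g → SingularR p g → p = 0)
    (hS : Comm π S) (hT : Comm π T) (hS0 : 0 ≤ S) (hS1 : S ≤ 1) (hT0 : 0 ≤ T) (hT1 : T ≤ 1)
    (hSa : AbsContR (fnOf π ξ S) g) (hTa : AbsContR (fnOf π ξ T) g)
    (hs : SingularR (fnOf π ξ (1 - T)) g) : S = S * T := by
  have hTsa : star T = T := hT0.isSelfAdjoint
  have hQsa : star (1 - T) = 1 - T := by rw [star_sub, star_one, hTsa]
  have hQ0 : 0 ≤ 1 - T := sub_nonneg.2 hT1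
  set R := (1 - T) * S * (1 - T) with hR
  have hRc : Comm π R := (((Comm.one π).sub hT).mul hS).mul ((Comm.one π).sub hT)
  have hR0 : 0 ≤ R := IsSelfAdjoint.conjugate_nonneg hS0 hQsa
  have hTT : 0 ≤ T - T * T := by
    have := Commute.mul_nonneg hT0 hQ0 ((Commute.one_right _).sub_right (Commute.refl T))
    rwa [mul_sub, mul_one] at this
  have hR1 : R ≤ 1 - T := by
    have a1 : 0 ≤ (1 - T) * (1 - S) * (1 - T) :=
      IsSelfAdjoint.conjugate_nonneg (sub_nonneg.2 hS1) hQsa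
    have := add_nonneg a1 hTT
    rw [← sub_nonneg]
    convert this using 1
    rw [hR]; noncomm_ring
  have hR2 : R ≤ (S + T) + (S + T) := by
    have hPsa : star (1 + T) = 1 + T := by rw [star_add, star_one, hTsa]
    have a1 : 0 ≤ (1 + T) * S * (1 + T) := IsSelfAdjoint.conjugate_nonneg hS0 hPsa
    have a2 : 0 ≤ T * (1 - S) * T := IsSelfAdjoint.conjugate_nonneg (sub_nonneg.2 hS1) hTsa
    have a3 := add_nonneg a2 hTT
    have := add_nonneg a1 (add_nonneg a3 a3)
    rw [← sub_nonneg]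
    convert this using 1
    rw [hR]; noncomm_ring
  have hSTc := hS.add hT
  have rp := fnOf_representable hRc hR0 ξ
  have rf := fnOf_representable (hSTc.add hSTc) (add_nonneg (add_nonneg hS0 hT0)
    (add_nonneg hS0 hT0)) ξ
  have hac : AbsContR (fnOf π ξ ((S + T) + (S + T))) g := by
    rw [fnOf_add, fnOf_add]
    exact absCont_add (absCont_add hSa hTa) (absCont_add hSa hTa)
  have hz := h3 _ g (fnOf π ξ R) rf.1 rf.2 hg (representable_pos hg) rp.1 rp.2
    ((fnOf_le_iff hd hRc (hSTc.add hSTc)).2 hR2) hac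
    (singular_mono hs ((fnOf_le_iff hd hRc ((Comm.one π).sub hT)).2 hR1))
  have hzero : R = 0 := by
    apply fnOf_inj hd hRc (fun a => Commute.zero_left _)
    rw [hz]; ext a; simp [fnOf_apply]
  have := conj_eq_zero hS0 hQsa hzero
  rw [mul_sub, mul_one, sub_eq_zero] at this
  exact this

theorem unique_of_three
    (h3 : ∀ f g p : A →ₗ[ℂ] ℂ,
          IsRepresentable f → IsPosFn f → IsRepresentable g → IsPosFn g →
          IsRepresentable p → IsPosFn p →
          FnLE p f → AbsContR f g → SingularR p g → p = 0) : LebDecompUniqueR A := by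
  intro f g hf _ hg _ fr fs fr' fs' hdec hdec'
  obtain ⟨r1, r2, r3, r4, e, ac, sg⟩ := hdec
  obtain ⟨r1', r2', r3', r4', e', ac', sg'⟩ := hdec'
  suffices h : fr = fr' by
    refine ⟨h, ?_⟩
    rw [e, h] at e'
    exact add_left_cancel e'
  obtain ⟨H, _, _, _, π, ξ, hd, hfx⟩ := hf
  have hf1 : f = fnOf π ξ 1 := by ext a; rw [hfx]; rfl
  obtain ⟨T, hT, hT0, hT1, eT⟩ := radon hd hfx r1 (by rw [e]; exact le_add_right' r4)
  obtain ⟨S, hS, hS0, hS1, eS⟩ := radon hd hfx r1' (by rw [e']; exact le_add_right' r4')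
  have efs : fs = fnOf π ξ (1 - T) := by
    rw [fnOf_sub, ← hf1, ← eT, e, add_sub_cancel_left]
  have efs' : fs' = fnOf π ξ (1 - S) := by
    rw [fnOf_sub, ← hf1, ← eS, e', add_sub_cancel_left]
  rw [efs] at sg
  rw [efs'] at sg'
  rw [eT] at ac
  rw [eS] at ac'
  have k1 := unique_step hd hg h3 hS hT hS0 hS1 hT0 hT1 ac' ac sg
  have k2 := unique_step hd hg h3 hT hS hT0 hT1 hS0 hS1 ac ac' sg'
  have hTsa : star T = T := hT0.isSelfAdjoint
  have hSsa : star S = S := hS0.isSelfAdjoint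
  have k3 := congrArg star k2
  rw [star_mul, hTsa, hSsa, ← k1] at k3
  rw [eT, eS, k3]

end LebAux

/-- **Lemma 2.2**: characterizations of the uniqueness of the Lebesgue decomposition of
representable positive functionals over a `⋆`-algebra `A`. -/
theorem lebesgue_unique_tfae
    (A : Type) [NonUnitalRing A] [Module ℂ A] [SMulCommClass ℂ A A]
    [IsScalarTower ℂ A A] [StarRing A] [StarModule ℂ A] :
    List.TFAE
      [ LebDecompUniqueR A,
        ∀ t f g : A →ₗ[ℂ] ℂ,
          IsRepresentable t → IsPosFn t → IsRepresentable f → IsPosFn f →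
          IsRepresentable g → IsPosFn g →
          FnLE t f → AbsContR f g → AbsContR t g,
        ∀ f g p : A →ₗ[ℂ] ℂ,
          IsRepresentable f → IsPosFn f → IsRepresentable g → IsPosFn g →
          IsRepresentable p → IsPosFn p →
          FnLE p f → AbsContR f g → SingularR p g → p = 0 ] := by
  tfae_have 1 → 3 := by
    intro h f g p hf hf' hg hg' hp hp' hle hac hs
    have hh := LebAux.rep_add hf hp
    have hh' := LebAux.representable_pos hh
    have := h (f + p) g hh hh' hg hg' f p (f + p) 0
      ⟨hf, hf', hp, hp', rfl, hac, hs⟩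
      ⟨hh, hh', LebAux.rep_zero, LebAux.representable_pos LebAux.rep_zero, (add_zero _).symm,
        LebAux.absCont_add_of_le hf hg hp hle hac, LebAux.singular_zero g⟩
    exact this.2
  tfae_have 3 → 1 := LebAux.unique_of_three
  tfae_have 2 → 3 := by
    intro h f g p hf hf' hg hg' hp hp' hle hac hs
    exact LebAux.eq_zero_of_absCont_singular (h p f g hp hp' hf hf' hg hg' hle hac) hs
  tfae_have 3 → 2 := by
    intro h t f g ht ht' hf hf' hg hg' hle hac
    obtain ⟨r, s, r1, r2, r3, r4, e, ac, sg⟩ := LebAux.exists_decomp ht hg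
    have hs : s = 0 := h f g s hf hf' hg hg' r3 r4
      (LebAux.le_trans' (by rw [e]; exact LebAux.le_add_left' r2) hle) hac sg
    rw [e, hs, add_zero]
    exact ac
  tfae_finish
end

section
/- Let A be a C*-algebra and B a closed *-subalgebra of A. For positive functionals f and g on B, the following are equivalent: f is absolutely continuous with respect to g if and only if there exist norm-preserving positive extensions f̃ and g̃ of f and g to A such that f̃ is absolutely continuous with respect to g̃. -/
open scoped ComplexOrder

section CStarContinuousDefs

variable {A : Type} [NonUnitalCStarAlgebra A]

/-- A (continuous) linear functional on a C⋆-algebra is positive if `0 ≤ f (a⋆ * a)` for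
every `a`. -/
def IsPosFnL (f : A →L[ℂ] ℂ) : Prop := ∀ a : A, 0 ≤ f (star a * a)

/-- Order on positive functionals: `f ≤ g` iff `g - f` is positive. -/
def FnLEL (f g : A →L[ℂ] ℂ) : Prop := IsPosFnL (g - f)

/-- Absolute continuity `f ≪ g`: `f` is the pointwise limit of an increasing sequence of
positive functionals `fₙ` with `fₙ ≤ αₙ • g` for some positive reals `αₙ`. -/
def AbsContL (f g : A →L[ℂ] ℂ) : Prop :=
  ∃ (fn : ℕ → (A →L[ℂ] ℂ)) (α : ℕ → ℝ),
    (∀ n, IsPosFnL (fn n)) ∧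
    (∀ n, 0 < α n) ∧
    (∀ n, FnLEL (fn n) (fn (n + 1))) ∧
    (∀ n, FnLEL (fn n) (((α n : ℂ)) • g)) ∧
    (∀ a : A, Filter.Tendsto (fun n => fn n a) Filter.atTop (nhds (f a)))

variable (B : NonUnitalStarSubalgebra ℂ A) [IsClosed (B : Set A)]

/-- `ft` is a norm-preserving positive extension to `A` of the positive functional `f`
defined on the closed `⋆`-subalgebra `B`. -/
def IsNormPresExt (f : ↥B →L[ℂ] ℂ) (ft : A →L[ℂ] ℂ) : Prop :=
  IsPosFnL ft ∧ (∀ b : ↥B, ft ↑b = f b) ∧ ‖ft‖ = ‖f‖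

end CStarContinuousDefs

open Filter Topology

/-- Norm-approximation of a positive functional along the canonical approximate unit. -/
lemma posFn_eventually_lt {A : Type} [NonUnitalCStarAlgebra A] [PartialOrder A]
    [StarOrderedRing A] (f : A →L[ℂ] ℂ) (hf : IsPosFnL f) (r : ℝ) (hr : r < ‖f‖) :
    ∀ᶠ e in CStarAlgebra.approximateUnit A, r < (f (star e * e)).re := by
  have hpos : ∀ x : A, 0 ≤ x → 0 ≤ f x := by
    intro x hx
    obtain ⟨b, rfl⟩ := CStarAlgebra.nonneg_iff_eq_star_mul_self.mp hx
    exact hf b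
  let φ : A →ₚ[ℂ] ℂ := PositiveLinearMap.mk₀ (f : A →ₗ[ℂ] ℂ) hpos
  have cs : ∀ x y : A, ‖f (star x * y)‖ ^ 2 ≤ (f (star x * x)).re * (f (star y * y)).re := by
    intro x y
    have h := norm_inner_le_norm (𝕜 := ℂ) (φ.toPreGNS x) (φ.toPreGNS y)
    rw [φ.preGNS_inner_def, φ.preGNS_norm_def, φ.preGNS_norm_def] at h
    have h1 : ‖f (star x * y)‖ ≤ √(f (star x * x)).re * √(f (star y * y)).re := h
    have hx := (Complex.nonneg_iff.mp (hf x)).1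
    have hy := (Complex.nonneg_iff.mp (hf y)).1
    calc _ ≤ (√(f (star x * x)).re * √(f (star y * y)).re) ^ 2 := by gcongr
      _ = _ := by rw [mul_pow, Real.sq_sqrt hx, Real.sq_sqrt hy]
  by_cases hr0 : r < 0
  · exact Eventually.of_forall fun e => hr0.trans_le (Complex.nonneg_iff.mp (hf e)).1
  push Not at hr0
  have hN : 0 < ‖f‖ := hr0.trans_lt hr
  have hs : √(r * ‖f‖) < ‖f‖ := by
    rw [Real.sqrt_lt' hN, sq]
    gcongr
  obtain ⟨b, hb1, hb⟩ := f.exists_lt_apply_of_lt_opNorm hs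
  have hau := CStarAlgebra.increasingApproximateUnit A
  have ht : Tendsto (fun e => ‖f (e * b)‖) (CStarAlgebra.approximateUnit A) (𝓝 ‖f b‖) :=
    ((f.continuous.norm).tendsto b).comp (hau.tendsto_mul_right b)
  filter_upwards [ht.eventually_const_lt hb, hau.eventually_star_eq] with e he hse
  have h1 := cs e b
  rw [hse] at h1 ⊢
  have h2 : (f (star b * b)).re ≤ ‖f‖ := by
    calc _ ≤ ‖f (star b * b)‖ := Complex.re_le_norm _
      _ ≤ ‖f‖ * ‖star b * b‖ := f.le_opNorm _
      _ ≤ ‖f‖ * 1 := by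
        gcongr
        rw [CStarRing.norm_star_mul_self]
        nlinarith [norm_nonneg b]
      _ = _ := mul_one _
  have h3 : 0 ≤ (f (e * e)).re := by
    have := (Complex.nonneg_iff.mp (hf e)).1
    rwa [hse] at this
  have h4 : r * ‖f‖ < ‖f (e * b)‖ ^ 2 := by
    rw [← Real.sqrt_lt' ((Real.sqrt_nonneg _).trans_lt he)]
    exact he
  have h5 : r * ‖f‖ < (f (e * e)).re * ‖f‖ :=
    h4.trans_le (h1.trans (mul_le_mul_of_nonneg_left h2 h3))
  exact lt_of_mul_lt_mul_right h5 hN.le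

/-- The norm is additive on positive functionals. -/
lemma posFn_norm_add {A : Type} [NonUnitalCStarAlgebra A] (f g : A →L[ℂ] ℂ)
    (hf : IsPosFnL f) (hg : IsPosFnL g) : ‖f + g‖ = ‖f‖ + ‖g‖ := by
  let _ := CStarAlgebra.spectralOrder A
  have _ := CStarAlgebra.spectralOrderedRing A
  refine le_antisymm (norm_add_le _ _) ?_
  refine le_of_forall_pos_lt_add fun ε hε => ?_
  have h1 := posFn_eventually_lt f hf (‖f‖ - ε / 2) (by linarith)
  have h2 := posFn_eventually_lt g hg (‖g‖ - ε / 2) (by linarith)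
  have h3 := (CStarAlgebra.increasingApproximateUnit A).eventually_norm
  obtain ⟨e, h1, h2, h3⟩ := (h1.and (h2.and h3)).exists
  have h4 : (f (star e * e)).re + (g (star e * e)).re ≤ ‖f + g‖ := by
    calc _ = ((f + g) (star e * e)).re := by simp
      _ ≤ ‖(f + g) (star e * e)‖ := Complex.re_le_norm _
      _ ≤ ‖f + g‖ * ‖star e * e‖ := (f + g).le_opNorm _
      _ ≤ ‖f + g‖ * 1 := by
        gcongr
        rw [CStarRing.norm_star_mul_self]
        nlinarith [norm_nonneg e]
      _ = _ := mul_one _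
  linarith

/-- `‖2 e⋆e - 1‖ ≤ 1` when `‖e‖ ≤ 1`. -/
lemma norm_two_star_mul_self_sub_one_le {U : Type} [CStarAlgebra U] (e : U) (he : ‖e‖ ≤ 1) :
    ‖(2 : ℂ) • (star e * e) - 1‖ ≤ 1 := by
  let _ := CStarAlgebra.spectralOrder U
  have _ := CStarAlgebra.spectralOrderedRing U
  set y : U := (2 : ℂ) • (star e * e) - 1 with hy
  have hsy : star y = y := by simp [hy]
  have h1 : star y * y ≤ 1 := by
    have h2 : 0 ≤ 1 - e * star e := by
      rw [sub_nonneg, ← CStarAlgebra.norm_le_one_iff_of_nonneg _ (mul_star_self_nonneg e),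
        CStarRing.norm_self_mul_star]
      nlinarith [norm_nonneg e]
    have h3 := star_left_conjugate_nonneg h2 ((2 : ℂ) • e)
    have h4 : star ((2 : ℂ) • e) * (1 - e * star e) * ((2 : ℂ) • e) = 1 - star y * y := by
      rw [hsy, hy]
      simp only [two_smul, mul_sub, sub_mul, mul_add, add_mul, mul_one, one_mul,
        star_add, mul_assoc]
      abel
    rw [h4] at h3
    exact sub_nonneg.mp h3
  rw [← CStarAlgebra.norm_le_one_iff_of_nonneg _ (star_mul_self_nonneg y),
    CStarRing.norm_star_mul_self] at h1
  nlinarith [norm_nonneg y]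

/-- On a unital C⋆-algebra, a functional with `H 1 = ‖H‖` is positive. -/
lemma posFn_of_map_one {U : Type} [CStarAlgebra U] (H : U →L[ℂ] ℂ) (h1 : H 1 = (‖H‖ : ℂ)) :
    IsPosFnL H := by
  let _ := CStarAlgebra.spectralOrder U
  have _ := CStarAlgebra.spectralOrderedRing U
  intro a
  set w : U := star a * a with hw
  have hw0 : 0 ≤ w := star_mul_self_nonneg a
  have hsw : star w = w := by simp [hw]
  set N := ‖H‖
  have hmap : ∀ z : ℂ, H (algebraMap ℂ U z) = z * N := by
    intro z
    rw [Algebra.algebraMap_eq_smul_one, map_smul, h1, smul_eq_mul]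
  have hN : 0 ≤ N := norm_nonneg H
  rw [Complex.nonneg_iff]
  constructor
  · set t := ‖w‖
    have ht : 0 ≤ t := norm_nonneg w
    have hle : w ≤ algebraMap ℝ U t := IsSelfAdjoint.le_algebraMap_norm_self (.of_nonneg hw0)
    have h2 : ‖algebraMap ℝ U t - w‖ ≤ t := by
      rw [CStarAlgebra.norm_le_iff_le_algebraMap _ ht (sub_nonneg.mpr hle)]
      exact sub_le_self _ hw0
    have h3 : (t * N - (H w).re) ≤ N * t := by
      calc _ = (H (algebraMap ℂ U t - w)).re := by
            rw [map_sub, hmap]; simp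
        _ ≤ ‖H (algebraMap ℂ U t - w)‖ := Complex.re_le_norm _
        _ ≤ N * ‖algebraMap ℂ U t - w‖ := H.le_opNorm _
        _ ≤ N * t := by
          gcongr
          rw [IsScalarTower.algebraMap_apply ℝ ℂ U] at h2
          exact h2
    linarith
  · have key : ∀ s : ℝ, ((H w).im + s * N) ^ 2 ≤ N ^ 2 * (‖w‖ ^ 2 + s ^ 2) := by
      intro s
      set y : U := w + algebraMap ℂ U (s * Complex.I) with hy
      have e1 : star y * y = w * w + algebraMap ℂ U (s ^ 2 : ℝ) := by
        have : star y = w - algebraMap ℂ U (s * Complex.I) := by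
          rw [hy, star_add, hsw, ← algebraMap_star_comm]
          simp [sub_eq_add_neg]
        rw [this, hy]
        have hc := Algebra.commutes (s * Complex.I) w
        rw [sub_mul, mul_add, mul_add, ← hc, ← map_mul]
        have : (s * Complex.I) * (s * Complex.I) = -((s ^ 2 : ℝ) : ℂ) := by
          push_cast
          linear_combination (s : ℂ) ^ 2 * Complex.I_mul_I
        rw [this, map_neg]
        abel
      have e2 : ‖y‖ ^ 2 ≤ ‖w‖ ^ 2 + s ^ 2 := by
        rw [sq, ← CStarRing.norm_star_mul_self, e1]
        rcases subsingleton_or_nontrivial U with hU | hU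
        · rw [Subsingleton.elim (w * w + algebraMap ℂ U (s ^ 2 : ℝ)) 0, norm_zero]
          positivity
        calc _ ≤ ‖w * w‖ + ‖algebraMap ℂ U (s ^ 2 : ℝ)‖ := norm_add_le _ _
          _ ≤ ‖w‖ * ‖w‖ + s ^ 2 := by
            gcongr
            · exact norm_mul_le _ _
            · rw [norm_algebraMap']; simp
          _ = _ := by ring
      have e3 : |(H w).im + s * N| ≤ N * ‖y‖ := by
        calc _ = |(H y).im| := by rw [hy, map_add, hmap]; simp
          _ ≤ ‖H y‖ := Complex.abs_im_le_norm _
          _ ≤ _ := H.le_opNorm _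
      calc _ = |(H w).im + s * N| ^ 2 := (sq_abs _).symm
        _ ≤ (N * ‖y‖) ^ 2 := by gcongr
        _ = N ^ 2 * ‖y‖ ^ 2 := by ring
        _ ≤ _ := by gcongr
    by_contra hne
    have hne : (H w).im ≠ 0 := fun h => hne h.symm
    rcases hN.eq_or_lt with h0 | h0
    · have := key 0
      rw [← h0] at this
      have := sq_pos_of_ne_zero hne
      nlinarith
    · have := key ((N ^ 2 * ‖w‖ ^ 2) / (2 * N * (H w).im))
      set m := (H w).im
      have h5 : 2 * m * ((N ^ 2 * ‖w‖ ^ 2) / (2 * N * m) * N) = N ^ 2 * ‖w‖ ^ 2 := by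
        field_simp
      have := sq_pos_of_ne_zero hne
      nlinarith

/-- Existence of norm-preserving positive extensions. -/
lemma exists_normPresExt {A : Type} [NonUnitalCStarAlgebra A]
    (B : NonUnitalStarSubalgebra ℂ A) [IsClosed (B : Set A)]
    (f : ↥B →L[ℂ] ℂ) (hf : IsPosFnL f) : ∃ ft : A →L[ℂ] ℂ, IsNormPresExt B f ft := by
  let j : A →ₗᵢ[ℂ] Unitization ℂ A :=
    { toFun := fun a => (a : Unitization ℂ A)
      map_add' := by simp
      map_smul' := by simp
      norm_map' := fun a => Unitization.norm_inr a }
  let i : ↥B →ₗᵢ[ℂ] A :=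
    { toFun := fun b => (b : A)
      map_add' := fun _ _ => rfl
      map_smul' := fun _ _ => rfl
      norm_map' := fun _ => rfl }
  let k := j.comp i
  obtain ⟨H, hH, hHn⟩ := exists_extension_norm_eq k.range
    (f ∘L (k.equivRange.symm : k.range →L[ℂ] ↥B))
  have hHn : ‖H‖ = ‖f‖ := by
    rw [hHn]
    exact ContinuousLinearMap.opNorm_comp_linearIsometryEquiv f k.equivRange.symm
  have hH : ∀ b : ↥B, H ((b : A) : Unitization ℂ A) = f b := by
    intro b
    have := hH (k.equivRange b)
    simpa using! this
  have hone : H 1 = (‖H‖ : ℂ) := by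
    let _ := CStarAlgebra.spectralOrder ↥B
    have _ := CStarAlgebra.spectralOrderedRing ↥B
    have hz : ‖H 1‖ ≤ ‖H‖ := by
      have := H.le_opNorm 1
      rwa [CStarRing.norm_one, mul_one] at this
    have hre : ‖H‖ ≤ (H 1).re := by
      refine le_of_forall_pos_lt_add fun ε hε => ?_
      have h1 := posFn_eventually_lt f hf (‖f‖ - ε / 2) (by linarith)
      have h3 := (CStarAlgebra.increasingApproximateUnit ↥B).eventually_norm
      obtain ⟨e, h1, h3⟩ := (h1.and h3).exists
      have h4 := norm_two_star_mul_self_sub_one_le ((e : A) : Unitization ℂ A)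
        (by rw [Unitization.norm_inr]; exact h3)
      have h5 : H ((2 : ℂ) • (star ((e : A) : Unitization ℂ A) * ((e : A) : Unitization ℂ A)) - 1)
          = 2 * f (star e * e) - H 1 := by
        rw [map_sub, map_smul, ← hH (star e * e)]
        simp
      have h6 : 2 * (f (star e * e)).re - (H 1).re ≤ ‖H‖ := by
        calc _ = (2 * f (star e * e) - H 1).re := by simp
          _ ≤ ‖2 * f (star e * e) - H 1‖ := Complex.re_le_norm _
          _ ≤ ‖H‖ * ‖(2 : ℂ) • (star ((e : A) : Unitization ℂ A) *
                ((e : A) : Unitization ℂ A)) - 1‖ := by rw [← h5]; exact H.le_opNorm _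
          _ ≤ ‖H‖ * 1 := by gcongr
          _ = _ := mul_one _
      rw [hHn] at h6 ⊢
      linarith
    have h7 : (H 1).re = ‖H 1‖ :=
      le_antisymm (Complex.re_le_norm _) (hz.trans hre)
    have h8 : ‖H 1‖ = ‖H‖ := le_antisymm hz (hre.trans (Complex.re_le_norm _))
    have h9 := Complex.nonneg_iff.mp (Complex.re_eq_norm.mp h7)
    apply Complex.ext
    · simp [h7, h8]
    · simp [← h9.2]
  have hHpos := posFn_of_map_one H hone
  refine ⟨H ∘L j.toContinuousLinearMap, ?_, hH, ?_⟩
  · intro a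
    have := hHpos (a : Unitization ℂ A)
    have h2 : (H ∘L j.toContinuousLinearMap) (star a * a)
      = H (((star a * a : A)) : Unitization ℂ A) := rfl
    rw [h2, Unitization.inr_mul, Unitization.inr_star]
    exact this
  · apply le_antisymm
    · rw [← hHn]
      refine ContinuousLinearMap.opNorm_le_bound _ (norm_nonneg _) fun a => ?_
      calc _ ≤ ‖H‖ * ‖j a‖ := H.le_opNorm _
        _ = _ := by rw [j.norm_map]
    · refine ContinuousLinearMap.opNorm_le_bound _ (norm_nonneg _) fun b => ?_
      rw [← hH b]
      exact (H ∘L j.toContinuousLinearMap).le_opNorm (b : A)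

/-- Norm-bounded series of positive functionals. -/
lemma exists_posFn_series {A : Type} [NonUnitalCStarAlgebra A] (D : ℕ → (A →L[ℂ] ℂ)) (M : ℝ)
    (hD : ∀ n, IsPosFnL (D n)) (hM : ∀ n, ∑ k ∈ Finset.range n, ‖D k‖ ≤ M) :
    ∃ F : A →L[ℂ] ℂ, IsPosFnL F ∧ ‖F‖ ≤ M ∧ (∀ a, HasSum (fun n => D n a) (F a)) ∧
      ∀ n, IsPosFnL (F - D n) := by
  have hs : Summable fun n => ‖D n‖ := summable_of_sum_range_le (fun n => norm_nonneg _) hM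
  have hs' : Summable D := hs.of_norm
  have hsum : ∀ a, HasSum (fun n => D n a) ((∑' n, D n) a) := fun a =>
    (ContinuousLinearMap.apply ℂ ℂ a).hasSum hs'.hasSum
  refine ⟨∑' n, D n, ?_, ?_, hsum, ?_⟩
  · intro a
    exact (hsum _).nonneg fun n => hD n a
  · exact (norm_tsum_le_tsum_norm hs).trans
      (Real.tsum_le_of_sum_range_le (fun n => norm_nonneg _) hM)
  · intro n a
    rw [sub_apply, sub_nonneg]
    exact le_hasSum (hsum _) n fun m _ => hD m a

lemma posFn_add {A : Type} [NonUnitalCStarAlgebra A] {f g : A →L[ℂ] ℂ}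
    (hf : IsPosFnL f) (hg : IsPosFnL g) : IsPosFnL (f + g) := fun a =>
  add_nonneg (hf a) (hg a)

lemma posFn_smul {A : Type} [NonUnitalCStarAlgebra A] {f : A →L[ℂ] ℂ}
    (hf : IsPosFnL f) {c : ℝ} (hc : 0 ≤ c) : IsPosFnL ((c : ℂ) • f) := fun a =>
  mul_nonneg (Complex.zero_le_real.mpr hc) (hf a)

lemma posFn_sum {A : Type} [NonUnitalCStarAlgebra A] {D : ℕ → (A →L[ℂ] ℂ)}
    (hD : ∀ n, IsPosFnL (D n)) (n : ℕ) : IsPosFnL (∑ k ∈ Finset.range n, D k) := by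
  intro a
  rw [sum_apply]
  exact Finset.sum_nonneg fun k _ => hD k a

lemma posFn_norm_sum {A : Type} [NonUnitalCStarAlgebra A] {D : ℕ → (A →L[ℂ] ℂ)}
    (hD : ∀ n, IsPosFnL (D n)) (n : ℕ) :
    ‖∑ k ∈ Finset.range n, D k‖ = ∑ k ∈ Finset.range n, ‖D k‖ := by
  induction n with
  | zero => simp
  | succ n ih =>
    rw [Finset.sum_range_succ, Finset.sum_range_succ, posFn_norm_add _ _ (posFn_sum hD n) (hD n),
      ih]

lemma posFn_norm_le {A : Type} [NonUnitalCStarAlgebra A] {f g : A →L[ℂ] ℂ}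
    (hf : IsPosFnL f) (hfg : IsPosFnL (g - f)) : ‖f‖ ≤ ‖g‖ := by
  have h := posFn_norm_add f (g - f) hf hfg
  rw [add_sub_cancel] at h
  rw [h]
  exact le_add_of_nonneg_right (norm_nonneg _)

lemma normPresExt_of_le {A : Type} [NonUnitalCStarAlgebra A]
    (B : NonUnitalStarSubalgebra ℂ A) [IsClosed (B : Set A)]
    {f : ↥B →L[ℂ] ℂ} {ft : A →L[ℂ] ℂ} (h1 : IsPosFnL ft) (h2 : ∀ b : ↥B, ft ↑b = f b)
    (h3 : ‖ft‖ ≤ ‖f‖) : IsNormPresExt B f ft := by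
  refine ⟨h1, h2, le_antisymm h3 ?_⟩
  refine ContinuousLinearMap.opNorm_le_bound _ (norm_nonneg _) fun b => ?_
  rw [← h2 b]
  exact ft.le_opNorm (b : A)

lemma absCont_extend {A : Type} [NonUnitalCStarAlgebra A]
    (B : NonUnitalStarSubalgebra ℂ A) [IsClosed (B : Set A)]
    (f g : ↥B →L[ℂ] ℂ) (hg : IsPosFnL g) (hfg : AbsContL f g) :
    ∃ ft gt : A →L[ℂ] ℂ, IsNormPresExt B f ft ∧ IsNormPresExt B g gt ∧ AbsContL ft gt := by
  obtain ⟨fn, α, hfn, hα, hmono, hle, hlim⟩ := hfg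
  -- the increments
  let d : ℕ → (↥B →L[ℂ] ℂ) := fun n => Nat.casesOn n (fn 0) (fun m => fn (m + 1) - fn m)
  have hd : ∀ n, IsPosFnL (d n) := by
    rintro (_ | m)
    · exact hfn 0
    · exact hmono m
  have hdsum : ∀ n, ∑ k ∈ Finset.range (n + 1), d k = fn n := by
    intro n
    induction n with
    | zero => simp [d]
    | succ n ih =>
      rw [Finset.sum_range_succ, ih]
      simp [d]
  have hdle : ∀ n, IsPosFnL ((α n : ℂ) • g - d n) := by
    rintro (_ | m)
    · exact hle 0
    · have := posFn_add (hle (m + 1)) (hfn m)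
      have e : (α (m + 1) : ℂ) • g - d (m + 1) = ((α (m + 1) : ℂ) • g - fn (m + 1)) + fn m := by
        simp [d]
        abel
      rw [e]
      exact this
  -- partial sums are dominated by the limit
  have hfnle : ∀ n, IsPosFnL (f - fn n) := by
    intro n b
    have hmon : Monotone fun m => fn m (star b * b) := by
      refine monotone_nat_of_le_succ fun m => ?_
      have := hmono m b
      rwa [sub_apply, sub_nonneg] at this
    rw [sub_apply, sub_nonneg]
    exact hmon.ge_of_tendsto (hlim _) n
  have hdnorm : ∀ n, ∑ k ∈ Finset.range n, ‖d k‖ ≤ ‖f‖ := by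
    intro n
    refine (Finset.sum_le_sum_of_subset_of_nonneg
      (Finset.range_subset_range.mpr n.le_succ) (fun _ _ _ => norm_nonneg _)).trans ?_
    rw [← posFn_norm_sum hd, hdsum]
    exact posFn_norm_le (hfn n) (hfnle n)
  choose D hD using fun n => exists_normPresExt B (d n) (hd n)
  obtain ⟨F, hF, hFn, hFs, -⟩ := exists_posFn_series D ‖f‖ (fun n => (hD n).1)
    (fun n => by simpa only [(hD _).2.2] using hdnorm n)
  -- the scaling constants
  let q : ℕ → ℝ := fun n => (1 / 2) ^ n / 2
  have hq : ∀ n, 0 < q n := fun n => by positivity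
  have hqs : HasSum q 1 := by
    have := hasSum_geometric_two.div_const 2
    simpa [q] using this
  let c : ℕ → ℝ := fun n => q n / α n
  have hc : ∀ n, 0 < c n := fun n => div_pos (hq n) (hα n)
  let h : ℕ → (↥B →L[ℂ] ℂ) := fun n => (c n : ℂ) • ((α n : ℂ) • g - d n)
  have hh : ∀ n, IsPosFnL (h n) := fun n => posFn_smul (hdle n) (hc n).le
  have hcd : ∀ n, IsPosFnL ((c n : ℂ) • d n) := fun n => posFn_smul (hd n) (hc n).le
  have hadd : ∀ n, (c n : ℂ) • d n + h n = (q n : ℂ) • g := by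
    intro n
    have : (c n : ℂ) * α n = q n := by
      rw [← Complex.ofReal_mul]
      congr 1
      exact div_mul_cancel₀ _ (hα n).ne'
    simp only [h]
    rw [smul_sub, smul_smul, this]
    abel
  choose E hE using fun n => exists_normPresExt B (h n) (hh n)
  let K : ℕ → (A →L[ℂ] ℂ) := fun n => (c n : ℂ) • D n + E n
  have hK : ∀ n, IsPosFnL (K n) := fun n => posFn_add (posFn_smul (hD n).1 (hc n).le) (hE n).1
  have hKn : ∀ n, ‖K n‖ ≤ q n * ‖g‖ := by
    intro n
    have h1 := posFn_norm_add _ _ (hcd n) (hh n)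
    rw [hadd, norm_smul, norm_smul] at h1
    have h2 : ‖K n‖ ≤ ‖(c n : ℂ)‖ * ‖D n‖ + ‖E n‖ := by
      refine (norm_add_le _ _).trans ?_
      rw [norm_smul]
    rw [(hD n).2.2, (hE n).2.2, ← h1] at h2
    rwa [Complex.norm_real, Real.norm_of_nonneg (hq n).le] at h2
  obtain ⟨G, hG, hGn, hGs, hGK⟩ := exists_posFn_series K ‖g‖ hK (by
    intro n
    calc _ ≤ ∑ k ∈ Finset.range n, q k * ‖g‖ := Finset.sum_le_sum fun k _ => hKn k
      _ = (∑ k ∈ Finset.range n, q k) * ‖g‖ := by rw [Finset.sum_mul]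
      _ ≤ 1 * ‖g‖ := by
        gcongr
        exact sum_le_hasSum _ (fun k _ => (hq k).le) hqs
      _ = _ := one_mul _)
  refine ⟨F, G, normPresExt_of_le B hF ?_ hFn, normPresExt_of_le B hG ?_ hGn, ?_⟩
  · intro b
    have h1 := ((hFs (b : A)).tendsto_sum_nat).comp (tendsto_add_atTop_nat 1)
    refine tendsto_nhds_unique h1 ((hlim b).congr fun n => ?_)
    simp only [Function.comp, (hD _).2.1]
    rw [← hdsum n, sum_apply]
  · intro b
    have h1 : HasSum (fun n => K n (b : A)) (g b) := by
      have h2 : HasSum (fun n => (q n : ℂ) * g b) (((1 : ℝ) : ℂ) * g b) :=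
        (Complex.hasSum_ofReal.mpr hqs).mul_right _
      rw [Complex.ofReal_one, one_mul] at h2
      convert h2 using 2 with n
      have h3 := congrArg (fun φ : ↥B →L[ℂ] ℂ => φ b) (hadd n)
      simp only [add_apply, smul_apply, smul_eq_mul] at h3
      rw [← h3, ← (hD n).2.1 b, ← (hE n).2.1 b]
      rfl
    exact (hGs (b : A)).unique h1
  · refine ⟨fun n => ∑ k ∈ Finset.range (n + 1), D k,
      fun n => ∑ k ∈ Finset.range (n + 1), (c k)⁻¹,
      fun n => posFn_sum (fun k => (hD k).1) _, ?_, ?_, ?_, ?_⟩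
    · intro n
      exact Finset.sum_pos (fun k _ => inv_pos.mpr (hc k)) (by simp)
    · intro n
      show IsPosFnL (∑ k ∈ Finset.range (n + 1 + 1), D k - ∑ k ∈ Finset.range (n + 1), D k)
      rw [Finset.sum_range_succ _ (n + 1), add_sub_cancel_left]
      exact (hD (n + 1)).1
    · intro n
      have h1 : ((∑ k ∈ Finset.range (n + 1), (c k)⁻¹ : ℝ) : ℂ) • G
          - ∑ k ∈ Finset.range (n + 1), D k
          = ∑ k ∈ Finset.range (n + 1), (((c k)⁻¹ : ℝ) : ℂ) • ((G - K k) + E k) := by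
        have h0 : ((∑ k ∈ Finset.range (n + 1), (c k)⁻¹ : ℝ) : ℂ) • G
            = ∑ k ∈ Finset.range (n + 1), (((c k)⁻¹ : ℝ) : ℂ) • G := by
          ext a
          rw [sum_apply, smul_apply, Complex.ofReal_sum, smul_eq_mul, Finset.sum_mul]
          rfl
        rw [h0, ← Finset.sum_sub_distrib]
        refine Finset.sum_congr rfl fun k _ => ?_
        have h2 : (G - K k) + E k = G - (c k : ℂ) • D k := by
          simp only [K]
          abel
        have h3 : (((c k)⁻¹ : ℝ) : ℂ) * (c k : ℂ) = 1 := by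
          rw [← Complex.ofReal_mul, inv_mul_cancel₀ (hc k).ne', Complex.ofReal_one]
        rw [h2, smul_sub, smul_smul, h3, one_smul]
      show IsPosFnL (((∑ k ∈ Finset.range (n + 1), (c k)⁻¹ : ℝ) : ℂ) • G
          - ∑ k ∈ Finset.range (n + 1), D k)
      rw [h1]
      exact posFn_sum (fun k => posFn_smul (posFn_add (hGK k) (hE k).1) (inv_pos.mpr (hc k)).le) _
    · intro a
      have h1 := ((hFs a).tendsto_sum_nat).comp (tendsto_add_atTop_nat 1)
      refine h1.congr fun n => ?_
      rw [sum_apply]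
      rfl

lemma absCont_restrict {A : Type} [NonUnitalCStarAlgebra A]
    (B : NonUnitalStarSubalgebra ℂ A) [IsClosed (B : Set A)]
    (f g : ↥B →L[ℂ] ℂ) (ft gt : A →L[ℂ] ℂ) (hf : IsNormPresExt B f ft)
    (hg : IsNormPresExt B g gt) (h : AbsContL ft gt) : AbsContL f g := by
  obtain ⟨fn, α, hfn, hα, hmono, hle, hlim⟩ := h
  let i : ↥B →ₗᵢ[ℂ] A :=
    { toFun := fun b => (b : A)
      map_add' := fun _ _ => rfl
      map_smul' := fun _ _ => rfl
      norm_map' := fun _ => rfl }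
  refine ⟨fun n => fn n ∘L i.toContinuousLinearMap, α, fun n b => hfn n (b : A), hα,
    fun n b => hmono n (b : A), fun n b => ?_, fun b => ?_⟩
  · have h1 := hle n (b : A)
    have h2 : gt (star (b : A) * (b : A)) = g (star b * b) := hg.2.1 (star b * b)
    rw [sub_apply, smul_apply, h2] at h1
    exact h1
  · rw [← hf.2.1 b]
    exact hlim (b : A)

/-- **Lemma 2.6 (2)**: for positive functionals `f, g` on a closed `⋆`-subalgebra `B` of a
C⋆-algebra `A`, `f ≪ g` holds iff there exist norm-preserving positive extensions
`f̃, g̃` of `f` and `g` to `A` with `f̃ ≪ g̃`. -/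
theorem absCont_iff_exists_normPres_extensions
    {A : Type} [NonUnitalCStarAlgebra A]
    (B : NonUnitalStarSubalgebra ℂ A) [IsClosed (B : Set A)]
    (f g : ↥B →L[ℂ] ℂ) (hf : IsPosFnL f) (hg : IsPosFnL g) :
    AbsContL f g ↔
      ∃ ft gt : A →L[ℂ] ℂ, IsNormPresExt B f ft ∧ IsNormPresExt B g gt ∧ AbsContL ft gt := by
  constructor
  · exact absCont_extend B f g hg
  · rintro ⟨ft, gt, h1, h2, h3⟩
    exact absCont_restrict B f g ft gt h1 h2 h3
end
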